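/- arXiv:2403.01064 — 5 statements merged into one kernel-verified Lean document; each statement's English description precedes it below -/
import Mathlib

section
/- Let q ∈ ℂ with 0 < |q| < 1, let A : ℤ → ℂ be any sequence, and let b, t, x ∈ ℂ with b·t ≠ q^{-m} for every m ∈ ℕ (so that (bt;q)_j ≠ 0 for all j). Assume the family (i,j) ↦ A_{i-j} q^{ij} x^j (bq^{-i};q)_j (t;q)_j / ((q;q)_i (q;q)_j (bt;q)_j) indexed by ℕ×ℕ is absolutely summable, and the family (i,j,k) ↦ A_{i-j} (-1)^k q^{k(k-1)/2} x^{j+k} (tq^{i+k};q)_j (b;q)_j / ((q;q)_i (q;q)_j (q;q)_k (bt;q)_j) indexed by ℕ×ℕ×ℕ is absolutely summable. Then ∑_{i,j≥0} A_{i-j} q^{ij} x^j (bq^{-i};q)_j (t;q)_j / ((q;q)_i (q;q)_j (bt;q)_j) = ∑_{i,j,k≥0} A_{i-j} (-1)^k q^{k(k-1)/2} x^{j+k} (tq^{i+k};q)_j (b;q)_j / ((q;q)_i (q;q)_j (q;q)_k (bt;q)_j). -/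
/-- The finite q-shifted factorial `(a;q)_n = ∏_{k=0}^{n-1} (1 - a q^k)`. -/
noncomputable def qPoch (a q : ℂ) (n : ℕ) : ℂ := ∏ k ∈ Finset.range n, (1 - a * q ^ k)

/-- The infinite q-shifted factorial `(a;q)_∞ = ∏_{k=0}^{∞} (1 - a q^k)`. -/
noncomputable def qPochInf (a q : ℂ) : ℂ := ∏' k : ℕ, (1 - a * q ^ k)

/-- Saalschutz summand. -/
noncomputable def saalT (q b t : ℂ) (I M k : ℕ) : ℂ :=
  if k ≤ M ∧ k ≤ I then (-1 : ℂ) ^ k * q ^ (k * (k - 1) / 2) * qPoch (t * q ^ I) q (M - k) *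
    qPoch b q (M - k) / (qPoch q q (I - k) * qPoch q q (M - k) * qPoch q q k *
      qPoch (b * t) q (M - k)) else 0

theorem qPoch_succ' (a q : ℂ) (n : ℕ) : qPoch a q (n+1) = qPoch a q n * (1 - a * q ^ n) := by
  simp [qPoch, Finset.prod_range_succ]

theorem qPoch_zero' (a q : ℂ) : qPoch a q 0 = 1 := by simp [qPoch]

theorem tri_succ (k : ℕ) : (k + 1) * (k + 1 - 1) / 2 = k * (k - 1) / 2 + k := by
  rw [← Nat.choose_two_right, ← Nat.choose_two_right, Nat.choose_succ_succ' k 1, Nat.choose_one_right]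
  ring

theorem one_sub_ne (q : ℂ) (hq1 : ‖q‖ < 1) (n : ℕ) : 1 - q ^ (n+1) ≠ 0 := by
  intro h
  have h1 : q ^ (n+1) = 1 := (sub_eq_zero.mp h).symm
  have h2 : ‖q‖ ^ (n+1) = 1 := by rw [← norm_pow, h1, norm_one]
  have := pow_lt_one₀ (norm_nonneg q) hq1 (Nat.succ_ne_zero n)
  simp at this
  linarith

theorem qq_ne (q : ℂ) (hq1 : ‖q‖ < 1) (n : ℕ) : qPoch q q n ≠ 0 := by
  unfold qPoch
  refine Finset.prod_ne_zero_iff.mpr fun k _ => ?_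
  rw [← pow_succ']
  exact one_sub_ne q hq1 k

theorem saal_step (q : ℂ) (hq1 : ‖q‖ < 1) (b t : ℂ)
    (hb : ∀ m : ℕ, 1 - b * t * q ^ m ≠ 0) (I M k : ℕ) (hk : k ≤ M) :
    (1 - q ^ (M+1)) * (1 - b * t * q ^ M) * saalT q b t I (M+1) k
      - (q ^ I - b * q ^ M) * (1 - t * q ^ M) * saalT q b t I M k
    = -(1 - b * t * q ^ (2 * M - k)) * (1 - q ^ (k+1)) * saalT q b t I (M+1) (k+1)
      - -(1 - b * t * q ^ (2 * M + 1 - k)) * (1 - q ^ k) * saalT q b t I (M+1) k := by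
  have hP : ∀ n, qPoch (b * t) q n ≠ 0 := fun n =>
    Finset.prod_ne_zero_iff.mpr fun k _ => hb k
  obtain ⟨j, rfl⟩ := Nat.exists_eq_add_of_le hk
  have e1 : 2 * (k + j) - k = 2 * j + k := by omega
  have e2 : 2 * (k + j) + 1 - k = 2 * j + k + 1 := by omega
  have e3 : k + j + 1 - k = j + 1 := by omega
  have e4 : k + j + 1 - (k + 1) = j := by omega
  have e5 : k + j - k = j := by omega
  have n1 := qq_ne q hq1 j
  have n2 := qq_ne q hq1 k
  have n3 := hP j
  have n4 := hb j
  have n5 := one_sub_ne q hq1 j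
  have n6 := one_sub_ne q hq1 k
  rcases lt_trichotomy k I with h | h | h
  · obtain ⟨i, rfl⟩ := Nat.exists_eq_add_of_lt h
    have n7 := qq_ne q hq1 i
    have n8 := one_sub_ne q hq1 i
    have e6 : k + i + 1 - k = i + 1 := by omega
    have e7 : k + i + 1 - (k + 1) = i := by omega
    unfold saalT
    rw [if_pos (by omega), if_pos (by omega), if_pos (by omega), e1, e2, e3, e4, e5, e6, e7,
      tri_succ]
    simp only [qPoch_succ', ← pow_succ'] at *
    generalize qPoch q q j = a1 at *
    generalize qPoch q q k = a2 at *
    generalize qPoch q q i = a3 at *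
    generalize qPoch (b*t) q j = a4 at *
    generalize qPoch b q j = a5 at *
    generalize qPoch (t * q ^ (k+i+1)) q j = a6 at *
    rw [pow_add q (k * (k-1)/2) k]
    generalize q ^ (k * (k-1)/2) = a7 at *
    rw [pow_succ (-1 : ℂ)]
    generalize (-1 : ℂ) ^ k = a8 at *
    have m1 : q ^ (2 * j + k) = q ^ j * q ^ j * q ^ k := by ring
    simp only [pow_succ, pow_add, m1] at *
    generalize q ^ j = Q at *
    generalize q ^ k = y at *
    generalize q ^ i = z at *
    have p6 : 1 - q * z ≠ 0 := by convert n8 using 1; ring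
    have p7 : 1 - q * y ≠ 0 := by convert n6 using 1; ring
    have p8 : 1 - q * Q ≠ 0 := by convert n5 using 1; ring
    have p1 : 1 - t * Q * b ≠ 0 := by convert n4 using 1; ring
    have p2 : 1 - t * b * Q ≠ 0 := by convert n4 using 1; ring
    have p3 : 1 - b * Q * t ≠ 0 := by convert n4 using 1; ring
    have p4 : 1 - Q * b * t ≠ 0 := by convert n4 using 1; ring
    have p5 : 1 - Q * t * b ≠ 0 := by convert n4 using 1; ring
    field_simp
    ring
  · subst h
    unfold saalT
    rw [if_pos (by omega), if_pos (by omega), if_neg (by omega), e1, e2, e3, e5]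
    simp only [qPoch_succ', ← pow_succ', Nat.sub_self, qPoch_zero'] at *
    generalize qPoch q q j = a1 at *
    generalize qPoch q q k = a2 at *
    generalize qPoch (b*t) q j = a4 at *
    generalize qPoch b q j = a5 at *
    generalize qPoch (t * q ^ k) q j = a6 at *
    generalize q ^ (k * (k-1)/2) = a7 at *
    generalize (-1 : ℂ) ^ k = a8 at *
    simp only [pow_succ, pow_add] at *
    rw [show q ^ (2 * j) = q ^ j * q ^ j by ring]
    generalize q ^ j = Q at *
    generalize q ^ k = y at *
    have p1 : 1 - t * Q * b ≠ 0 := by convert n4 using 1; ring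
    have p2 : 1 - t * b * Q ≠ 0 := by convert n4 using 1; ring
    have p3 : 1 - b * Q * t ≠ 0 := by convert n4 using 1; ring
    have p4 : 1 - Q * b * t ≠ 0 := by convert n4 using 1; ring
    have p5 : 1 - Q * t * b ≠ 0 := by convert n4 using 1; ring
    field_simp
    ring
  · unfold saalT
    rw [if_neg (by omega), if_neg (by omega), if_neg (by omega)]
    ring

theorem saal_rec (q : ℂ) (hq1 : ‖q‖ < 1) (b t : ℂ)
    (hb : ∀ m : ℕ, 1 - b * t * q ^ m ≠ 0) (I M : ℕ) :
    (1 - q ^ (M+1)) * (1 - b * t * q ^ M) * ∑ k ∈ Finset.range (M+2), saalT q b t I (M+1) k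
      = (q ^ I - b * q ^ M) * (1 - t * q ^ M) * ∑ k ∈ Finset.range (M+1), saalT q b t I M k := by
  have h := Finset.sum_congr (rfl : Finset.range (M+1) = Finset.range (M+1)) (fun k hk =>
    saal_step q hq1 b t hb I M k (by have := Finset.mem_range.mp hk; omega))
  have h' := Finset.sum_range_sub (fun k =>
    -(1 - b * t * q ^ (2 * M + 1 - k)) * (1 - q ^ k) * saalT q b t I (M+1) k) (M+1)
  simp only [show ∀ k, 2 * M + 1 - (k+1) = 2 * M - k by omega] at h'
  rw [h', Finset.sum_sub_distrib, ← Finset.mul_sum, ← Finset.mul_sum] at h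
  rw [Finset.sum_range_succ, mul_add]
  rw [show 2 * M - M = M by omega] at h
  simp only [pow_zero, sub_self, mul_zero, zero_mul, sub_zero] at h
  linear_combination h

theorem saal (q : ℂ) (hq0 : q ≠ 0) (hq1 : ‖q‖ < 1) (b t : ℂ)
    (hb : ∀ m : ℕ, 1 - b * t * q ^ m ≠ 0) (I M : ℕ) :
    ∑ k ∈ Finset.range (M+1), saalT q b t I M k = q ^ (I * M) *
      qPoch (b * q ^ (-(I : ℤ))) q M * qPoch t q M /
      (qPoch q q I * qPoch q q M * qPoch (b * t) q M) := by
  induction M with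
  | zero => simp [saalT, qPoch_zero']
  | succ M ih =>
    have h := saal_rec q hq1 b t hb I M
    have hP : qPoch (b * t) q M ≠ 0 := Finset.prod_ne_zero_iff.mpr fun k _ => hb k
    have n1 := qq_ne q hq1 M
    have n2 := qq_ne q hq1 I
    have n3 := one_sub_ne q hq1 M
    have n4 := hb M
    have n5 : q ^ I ≠ 0 := pow_ne_zero _ hq0
    rw [ih] at h
    apply mul_left_cancel₀ (mul_ne_zero n3 n4)
    rw [h]
    simp only [qPoch_succ', ← pow_succ'] at *
    rw [show q ^ (I * (M+1)) = q ^ (I * M) * q ^ I by ring]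
    have : q ^ I - b * q ^ M = q ^ I * (1 - b * q ^ (-(I:ℤ)) * q ^ M) := by
      rw [zpow_neg, zpow_natCast]; field_simp
    rw [this]
    generalize 1 - b * q ^ (-(I:ℤ)) * q ^ M = w at *
    generalize qPoch (b * t) q M = a1 at *
    generalize 1 - b * t * q ^ M = a2 at *
    field_simp

theorem stmt0 (q : ℂ) (hq0 : 0 < ‖q‖) (hq1 : ‖q‖ < 1)
    (A : ℤ → ℂ) (b t x : ℂ)
    (hbt : ∀ m : ℕ, b * t ≠ q ^ (-(m : ℤ)))
    (h1 : Summable (fun p : ℕ × ℕ => ‖A ((p.1 : ℤ) - (p.2 : ℤ)) * q ^ (p.1 * p.2) * x ^ p.2 *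
      qPoch (b * q ^ (-(p.1 : ℤ))) q p.2 * qPoch t q p.2 /
      (qPoch q q p.1 * qPoch q q p.2 * qPoch (b * t) q p.2)‖))
    (h2 : Summable (fun p : ℕ × ℕ × ℕ => ‖A ((p.1 : ℤ) - (p.2.1 : ℤ)) * (-1 : ℂ) ^ p.2.2 *
      q ^ (p.2.2 * (p.2.2 - 1) / 2) * x ^ (p.2.1 + p.2.2) *
      qPoch (t * q ^ (p.1 + p.2.2)) q p.2.1 * qPoch b q p.2.1 /
      (qPoch q q p.1 * qPoch q q p.2.1 * qPoch q q p.2.2 * qPoch (b * t) q p.2.1)‖)) :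
    ∑' p : ℕ × ℕ, A ((p.1 : ℤ) - (p.2 : ℤ)) * q ^ (p.1 * p.2) * x ^ p.2 *
      qPoch (b * q ^ (-(p.1 : ℤ))) q p.2 * qPoch t q p.2 /
      (qPoch q q p.1 * qPoch q q p.2 * qPoch (b * t) q p.2)
    = ∑' p : ℕ × ℕ × ℕ, A ((p.1 : ℤ) - (p.2.1 : ℤ)) * (-1 : ℂ) ^ p.2.2 *
      q ^ (p.2.2 * (p.2.2 - 1) / 2) * x ^ (p.2.1 + p.2.2) *
      qPoch (t * q ^ (p.1 + p.2.2)) q p.2.1 * qPoch b q p.2.1 /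
      (qPoch q q p.1 * qPoch q q p.2.1 * qPoch q q p.2.2 * qPoch (b * t) q p.2.1) := by
  have hq : q ≠ 0 := norm_pos_iff.mp hq0
  have hb : ∀ m : ℕ, 1 - b * t * q ^ m ≠ 0 := by
    intro m h
    apply hbt m
    rw [zpow_neg, zpow_natCast]
    exact eq_inv_of_mul_eq_one_left (sub_eq_zero.mp h).symm
  let φ : ℕ × ℕ × ℕ → (ℕ × ℕ) × ℕ := fun p => ((p.1 + p.2.2, p.2.1 + p.2.2), p.2.2)
  have hφ : Function.Injective φ := by
    rintro ⟨i, j, k⟩ ⟨i', j', k'⟩ h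
    simp only [φ, Prod.mk.injEq] at h ⊢
    omega
  let g : (ℕ × ℕ) × ℕ → ℂ := fun p =>
    A ((p.1.1 : ℤ) - (p.1.2 : ℤ)) * x ^ p.1.2 * saalT q b t p.1.1 p.1.2 p.2
  have hg0 : ∀ p, p ∉ Set.range φ → g p = 0 := by
    rintro ⟨⟨I, M⟩, k⟩ h
    have : ¬ (k ≤ M ∧ k ≤ I) := by
      rintro ⟨h1, h2⟩
      exact h ⟨(I - k, M - k, k), by simp [φ, h1, h2]⟩
    simp [g, saalT, this]
  have hgφ : ∀ p : ℕ × ℕ × ℕ, g (φ p) = A ((p.1 : ℤ) - (p.2.1 : ℤ)) * (-1 : ℂ) ^ p.2.2 *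
      q ^ (p.2.2 * (p.2.2 - 1) / 2) * x ^ (p.2.1 + p.2.2) *
      qPoch (t * q ^ (p.1 + p.2.2)) q p.2.1 * qPoch b q p.2.1 /
      (qPoch q q p.1 * qPoch q q p.2.1 * qPoch q q p.2.2 * qPoch (b * t) q p.2.1) := by
    rintro ⟨i, j, k⟩
    have e : ((i + k : ℕ) : ℤ) - ((j + k : ℕ) : ℤ) = (i : ℤ) - j := by push_cast; ring
    simp only [g, φ, saalT, e, Nat.add_sub_cancel]
    rw [if_pos (by omega)]
    ring
  have hs : Summable g := by
    rw [← hφ.summable_iff hg0]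
    refine (Summable.of_norm h2).congr fun p => ?_
    exact (hgφ p).symm
  have hsupp : Function.support g ⊆ Set.range φ := by
    intro p hp
    by_contra h
    exact hp (hg0 p h)
  rw [← tsum_congr hgφ, hφ.tsum_eq hsupp, hs.tsum_prod]
  refine tsum_congr fun p => ?_
  rw [tsum_eq_sum (s := Finset.range (p.2 + 1))]
  · simp only [g]
    rw [← Finset.mul_sum, saal q hq hq1 b t hb]
    ring
  · intro k hk
    have : ¬ (k ≤ p.2 ∧ k ≤ p.1) := by
      simp only [Finset.mem_range] at hk
      omega
    simp [g, saalT, this]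
end

section
/- Let q ∈ ℂ with 0 < |q| < 1, let A : ℤ → ℂ be any sequence, and let b, t, x ∈ ℂ with b·t ≠ q^{-m} and x ≠ q^{-m} for every m ∈ ℕ. Assume the family (i,j) ↦ A_{i-j} q^{ij} x^j (bq^{-i};q)_j (t;q)_j / ((q;q)_i (q;q)_j (bt;q)_j) indexed by ℕ×ℕ and the family (i,j,k) ↦ A_{i-j} (t q^{i+j})^k x^j (q^{-j};q)_k (b;q)_j / ((q;q)_i (q;q)_j (q;q)_k (x;q)_k (bt;q)_j) indexed by ℕ×ℕ×ℕ are absolutely summable. Then ∑_{i,j≥0} A_{i-j} q^{ij} x^j (bq^{-i};q)_j (t;q)_j / ((q;q)_i (q;q)_j (bt;q)_j) = (x;q)_∞ · ∑_{i,j,k≥0} A_{i-j} (t q^{i+j})^k x^j (q^{-j};q)_k (b;q)_j / ((q;q)_i (q;q)_j (q;q)_k (x;q)_k (bt;q)_j). -/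
namespace QAux

noncomputable def V (q u : ℂ) (m : ℕ) : ℂ := ∏ s ∈ Finset.range m, (u - q ^ s)

lemma V_succ (q u : ℂ) (m : ℕ) : V q u (m+1) = V q u m * (u - q ^ m) := by
  simp [V, Finset.prod_range_succ]

lemma V_zero (q u : ℂ) : V q u 0 = 1 := by simp [V]

lemma P_zero (a q : ℂ) : qPoch a q 0 = 1 := by simp [qPoch]

lemma P_succ (a q : ℂ) (m : ℕ) : qPoch a q (m+1) = qPoch a q m * (1 - a * q ^ m) := by
  simp [qPoch, Finset.prod_range_succ]

lemma V_mul (q u : ℂ) (k : ℕ) : V q (q * u) (k+1) = (q*u - 1) * q ^ k * V q u k := by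
  induction k with
  | zero => simp [V]
  | succ k ih => rw [V_succ, ih, V_succ]; ring

lemma V_pow_zero (q : ℂ) {j k : ℕ} (h : j < k) : V q (q ^ j) k = 0 := by
  unfold V
  exact Finset.prod_eq_zero (Finset.mem_range.2 h) (by simp)

lemma V_pow (q : ℂ) (m i : ℕ) :
    V q (q ^ (i+m)) m * qPoch q q i = (-1) ^ m * q ^ (m.choose 2) * qPoch q q (i+m) := by
  induction m generalizing i with
  | zero => simp [V]
  | succ m ih =>
    have h := ih (i+1)
    rw [P_succ] at h
    have e : i + (m+1) = i + 1 + m := by ring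
    rw [e, V_succ, Nat.choose_succ_succ' m 1, Nat.choose_one_right]
    linear_combination (-q ^ m) * h

lemma one_sub_ne (q : ℂ) (hq1 : ‖q‖ < 1) (k : ℕ) : 1 - q * q ^ k ≠ 0 := by
  intro h
  have h1 : q ^ (k+1) = 1 := by rw [pow_succ']; linear_combination -h
  have h2 : ‖q‖ ^ (k+1) = 1 := by rw [← norm_pow, h1]; simp
  have := pow_lt_one₀ (norm_nonneg q) hq1 (Nat.succ_ne_zero k)
  simp at this
  linarith

lemma Q_ne (q : ℂ) (hq1 : ‖q‖ < 1) (n : ℕ) : qPoch q q n ≠ 0 := by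
  unfold qPoch
  exact Finset.prod_ne_zero_iff.2 fun k _ => one_sub_ne q hq1 k

lemma fac_ne (q a : ℂ) (hq : q ≠ 0) (h : ∀ m : ℕ, a ≠ q ^ (-(m : ℤ))) (k : ℕ) :
    1 - a * q ^ k ≠ 0 := by
  intro h0
  apply h k
  rw [zpow_neg, zpow_natCast]
  exact eq_inv_of_mul_eq_one_left (by linear_combination -h0)

lemma P_ne (q a : ℂ) (hq : q ≠ 0) (h : ∀ m : ℕ, a ≠ q ^ (-(m : ℤ))) (n : ℕ) :
    qPoch a q n ≠ 0 := by
  unfold qPoch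
  exact Finset.prod_ne_zero_iff.2 fun k _ => fac_ne q a hq h k

lemma P_neg (q b : ℂ) (hq : q ≠ 0) (I n : ℕ) :
    q ^ (I * n) * qPoch (b * q ^ (-(I:ℤ))) q n = ∏ k ∈ Finset.range n, (q ^ I - b * q ^ k) := by
  unfold qPoch
  rw [pow_mul]
  conv_lhs => rw [← Finset.card_range n, ← Finset.prod_const, Finset.card_range,
    ← Finset.prod_mul_distrib]
  refine Finset.prod_congr rfl fun k _ => ?_
  have : q ^ I ≠ 0 := pow_ne_zero _ hq
  rw [zpow_neg, zpow_natCast]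
  field_simp

lemma qbin (q w : ℂ) (hq1 : ‖q‖ < 1) (j K : ℕ) (hK : j < K) :
    ∑ k ∈ Finset.range K, V q (q ^ j) k / qPoch q q k * w ^ k = qPoch w q j := by
  induction j generalizing K with
  | zero =>
    rw [Finset.sum_eq_single 0]
    · simp [V, qPoch]
    · intro k _ hk
      rw [V_pow_zero q (Nat.pos_of_ne_zero hk)]; simp
    · intro h; simp at h; omega
  | succ j ih =>
    obtain ⟨K, rfl⟩ : ∃ K', K = K' + 1 := ⟨K - 1, by omega⟩
    have h1 := ih (K+1) (by omega)
    have h2 := ih K (by omega)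
    rw [Finset.sum_range_succ'] at h1 ⊢
    rw [P_succ]
    have : ∀ k, V q (q ^ (j+1)) (k+1) / qPoch q q (k+1) * w ^ (k+1) =
        V q (q ^ j) (k+1) / qPoch q q (k+1) * w ^ (k+1)
          - q ^ j * w * (V q (q ^ j) k / qPoch q q k * w ^ k) := by
      intro k
      have e1 := Q_ne q hq1 k
      have e2 := one_sub_ne q hq1 k
      rw [pow_succ' q j, V_mul, V_succ, P_succ]
      field_simp
      ring
    simp_rw [this]
    rw [Finset.sum_sub_distrib, ← Finset.mul_sum, h2]
    simp only [V_zero] at h1 ⊢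
    linear_combination h1

noncomputable def tau (q u b t : ℂ) (n m : ℕ) : ℂ :=
  V q u m / qPoch q q m * (qPoch b q (n-m) * qPoch (t*u) q (n-m)) /
    (qPoch q q (n-m) * qPoch (b*t) q (n-m))

lemma tau_partial (q u b t : ℂ) (hq : q ≠ 0) (hq1 : ‖q‖ < 1)
    (hbt : ∀ m : ℕ, b * t ≠ q ^ (-(m : ℤ))) (n m : ℕ) (hm : m ≤ n) :
    ∑ k ∈ Finset.range (m+1), (tau q u b t (n+1) k * ((1 - q * q ^ n) * (1 - b*t*q^n))
      - (u - b * q ^ n) * (1 - t * q ^ n) * tau q u b t n k)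
      = -(u - q ^ m) * (1 - b*t*q^(2*n-m)) * tau q u b t n m := by
  induction m with
  | zero =>
    have e1 := Q_ne q hq1 n
    have e2 := one_sub_ne q hq1 n
    have e3 := P_ne q (b*t) hq hbt n
    have e4 := fac_ne q (b*t) hq hbt n
    simp only [zero_add, Finset.sum_range_one, tau, V_zero, P_zero, Nat.sub_zero, P_succ]
    rw [pow_mul']
    generalize q ^ n = z at *
    obtain ⟨d1, h1⟩ : ∃ d, d = 1 - q * z := ⟨_, rfl⟩
    obtain ⟨d2, h2⟩ : ∃ d, d = 1 - b * t * z := ⟨_, rfl⟩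
    rw [← h1] at e2 ⊢
    rw [← h2] at e4 ⊢
    field_simp
    ring
  | succ m ih =>
    rw [Finset.sum_range_succ, ih (by omega)]
    obtain ⟨j, rfl⟩ : ∃ j, n = m + 1 + j := ⟨n - (m+1), by omega⟩
    have a1 : m + 1 + j + 1 - (m+1) = j + 1 := by omega
    have a2 : m + 1 + j - (m+1) = j := by omega
    have a3 : m + 1 + j - m = j + 1 := by omega
    have a4 : 2 * (m+1+j) - m = m + j + j + 2 := by omega
    have a5 : 2 * (m+1+j) - (m+1) = m + j + j + 1 := by omega
    simp only [tau, a1, a2, a3, a4, a5, P_succ, V_succ]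
    have e1 := Q_ne q hq1 m
    have e2 := one_sub_ne q hq1 m
    have e3 := P_ne q (b*t) hq hbt j
    have e4 := fac_ne q (b*t) hq hbt j
    have e5 := Q_ne q hq1 j
    have e6 := one_sub_ne q hq1 j
    simp only [pow_add, pow_one] at *
    generalize qPoch q q m = x1 at *
    generalize qPoch q q j = x2 at *
    generalize qPoch (b*t) q j = x3 at *
    generalize qPoch b q j = x4 at *
    generalize qPoch (t*u) q j = x5 at *
    generalize V q u m = x6 at *
    generalize q ^ m = x7 at *
    generalize q ^ j = x8 at *
    clear ih
    obtain ⟨d1, h1⟩ : ∃ d, d = 1 - q * x7 := ⟨_, rfl⟩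
    obtain ⟨d2, h2⟩ : ∃ d, d = 1 - q * x8 := ⟨_, rfl⟩
    obtain ⟨d3, h3⟩ : ∃ d, d = 1 - b * t * x8 := ⟨_, rfl⟩
    rw [← h1] at e2 ⊢
    rw [← h2] at e6 ⊢
    rw [← h3] at e4 ⊢
    field_simp
    rw [h1, h2, h3]
    ring

lemma saal (q u b t : ℂ) (hq : q ≠ 0) (hq1 : ‖q‖ < 1)
    (hbt : ∀ m : ℕ, b * t ≠ q ^ (-(m : ℤ))) (n : ℕ) :
    ∑ m ∈ Finset.range (n+1), tau q u b t n m =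
      (∏ k ∈ Finset.range n, (u - b * q ^ k)) * qPoch t q n / (qPoch q q n * qPoch (b*t) q n) := by
  induction n with
  | zero => simp [tau, P_zero, V_zero]
  | succ n ih =>
    have h := tau_partial q u b t hq hq1 hbt n n le_rfl
    rw [Finset.sum_sub_distrib, ← Finset.sum_mul, ← Finset.mul_sum, ih] at h
    rw [Finset.sum_range_succ, Finset.prod_range_succ, P_succ t, P_succ q, P_succ (b*t)]
    have e1 := Q_ne q hq1 n
    have e2 := one_sub_ne q hq1 n
    have e3 := P_ne q (b*t) hq hbt n
    have e4 := fac_ne q (b*t) hq hbt n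
    have h2 : tau q u b t (n+1) (n+1) * ((1 - q * q ^ n) * (1 - b*t*q^n)) =
      (u - q ^ n) * (1 - b*t*q^n) * tau q u b t n n := by
      simp only [tau, Nat.sub_self, P_zero, V_succ, P_succ]
      generalize 1 - q * q ^ n = d at *
      field_simp
    have a : 2 * n - n = n := by omega
    rw [a] at h
    have h3 : (∑ m ∈ Finset.range (n+1), tau q u b t (n+1) m + tau q u b t (n+1) (n+1))
      * ((1 - q * q ^ n) * (1 - b*t*q^n)) = (u - b * q ^ n) * (1 - t * q ^ n) *
      ((∏ k ∈ Finset.range n, (u - b * q ^ k)) * qPoch t q n /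
        (qPoch q q n * qPoch (b*t) q n)) := by
      linear_combination h + h2
    have e5 : (1 - q * q ^ n) * (1 - b*t*q^n) ≠ 0 := mul_ne_zero e2 e4
    rw [eq_div_of_mul_eq e5 h3]
    field_simp

noncomputable def E (q : ℂ) (m : ℕ) : ℂ := (-1) ^ m * q ^ (m.choose 2) / qPoch q q m

lemma E_succ (q : ℂ) (hq1 : ‖q‖ < 1) (m : ℕ) :
    E q (m+1) * (1 - q * q ^ m) = - q ^ m * E q m := by
  have e1 := Q_ne q hq1 m
  have e2 := one_sub_ne q hq1 m
  rw [E, E, P_succ, Nat.choose_succ_succ' m 1, Nat.choose_one_right]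
  field_simp
  ring

lemma E_summable (q y : ℂ) (hq1 : ‖q‖ < 1) : Summable fun m => ‖E q m * y ^ m‖ := by
  have ht : Filter.Tendsto (fun m : ℕ => -q ^ m * y / (1 - q * q ^ m)) Filter.atTop (nhds 0) := by
    have h := tendsto_pow_atTop_nhds_zero_of_norm_lt_one hq1
    have := (h.neg.mul_const y).div ((h.const_mul q).const_sub 1) (by simp)
    simpa [Pi.div_def] using this
  have ht2 := ht.norm
  rw [norm_zero] at ht2
  refine Summable.norm (summable_of_ratio_norm_eventually_le (r := 1/2) (by norm_num) ?_)
  filter_upwards [ht2.eventually (gt_mem_nhds (show (0:ℝ) < 1/2 by norm_num))] with m hm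
  have e2 := one_sub_ne q hq1 m
  have : E q (m+1) * y ^ (m+1) = (-q ^ m * y / (1 - q * q ^ m)) * (E q m * y ^ m) := by
    rw [eq_div_of_mul_eq e2 (E_succ q hq1 m)]
    field_simp
    ring
  rw [this, norm_mul]
  exact mul_le_mul_of_nonneg_right hm.le (norm_nonneg _)

noncomputable def f (q y : ℂ) : ℂ := ∑' m, E q m * y ^ m

lemma f_step (q y : ℂ) (hq1 : ‖q‖ < 1) : f q y = (1 - y) * f q (y * q) := by
  have s1 := (E_summable q y hq1).of_norm
  have s2 := (E_summable q (y*q) hq1).of_norm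
  unfold f
  rw [sub_mul, one_mul, ← tsum_mul_left, s1.tsum_eq_zero_add, s2.tsum_eq_zero_add]
  have s1' := (summable_nat_add_iff 1).2 s1
  have s2' := (summable_nat_add_iff 1).2 s2
  have : ∑' m, E q (m+1) * y ^ (m+1) =
      ∑' m, (E q (m+1) * (y*q) ^ (m+1) - y * (E q m * (y*q) ^ m)) := by
    refine tsum_congr fun m => ?_
    have := E_succ q hq1 m
    rw [mul_pow, mul_pow]
    linear_combination y ^ (m+1) * this
  rw [this, s2'.tsum_sub (s2.mul_left y)]
  simp
  ring

lemma f_iter (q y : ℂ) (hq1 : ‖q‖ < 1) (n : ℕ) : f q y = qPoch y q n * f q (y * q ^ n) := by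
  induction n with
  | zero => simp [P_zero]
  | succ n ih => rw [ih, f_step q (y * q ^ n) hq1, P_succ]; ring_nf

lemma P_tendsto (q y : ℂ) (hq1 : ‖q‖ < 1) :
    Filter.Tendsto (fun n => qPoch y q n) Filter.atTop (nhds (qPochInf y q)) := by
  have : Multipliable fun k : ℕ => (1 - y * q ^ k) := by
    have : Multipliable fun k : ℕ => (1 + -(y * q ^ k)) := by
      apply multipliable_one_add_of_summable
      simp only [norm_neg, norm_mul, norm_pow]
      exact (summable_geometric_of_lt_one (norm_nonneg _) hq1).mul_left _
    simpa [sub_eq_add_neg] using this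
  exact this.hasProd.tendsto_prod_nat

lemma f_tendsto (q y : ℂ) (hq1 : ‖q‖ < 1) :
    Filter.Tendsto (fun n => f q (y * q ^ n)) Filter.atTop (nhds 1) := by
  have h1 : (1:ℂ) = ∑' m, (if m = 0 then 1 else 0) := by simp
  rw [h1]
  unfold f
  refine tendsto_tsum_of_dominated_convergence (E_summable q y hq1) ?_ ?_
  · intro m
    rcases Nat.eq_zero_or_pos m with rfl | hm
    · simp [E, P_zero]
    · have h := tendsto_pow_atTop_nhds_zero_of_norm_lt_one hq1
      have := ((h.const_mul y).pow m).const_mul (E q m)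
      simpa [hm.ne'] using this
  · refine Filter.Eventually.of_forall fun n m => ?_
    rw [norm_mul, norm_mul, mul_pow, norm_mul]
    have : ‖(q ^ n) ^ m‖ ≤ 1 := by
      rw [← pow_mul, norm_pow]; exact pow_le_one₀ (norm_nonneg _) hq1.le
    have h2 := mul_le_mul_of_nonneg_left this (norm_nonneg (y ^ m))
    rw [mul_one] at h2
    exact mul_le_mul_of_nonneg_left h2 (norm_nonneg _)

lemma f_eq (q y : ℂ) (hq1 : ‖q‖ < 1) : f q y = qPochInf y q := by
  have := (P_tendsto q y hq1).mul (f_tendsto q y hq1)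
  simp_rw [← f_iter q y hq1, mul_one] at this
  exact tendsto_nhds_unique tendsto_const_nhds this

lemma P_bdd (q y : ℂ) (hq1 : ‖q‖ < 1) : ∃ C, ∀ n, ‖qPoch y q n‖ ≤ C := by
  obtain ⟨C, hC⟩ := (P_tendsto q y hq1).norm.bddAbove_range
  exact ⟨C, fun n => hC ⟨n, rfl⟩⟩

noncomputable def M (q : ℂ) (A : ℤ → ℂ) (b t x : ℂ) (p : ℕ × ℕ × ℕ) : ℂ :=
  A ((p.1 : ℤ) - (p.2.1 : ℤ)) * x ^ (p.2.1 + p.2.2) * E q p.2.2 * qPoch b q p.2.1 *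
    qPoch (t * q ^ (p.1 + p.2.2)) q p.2.1 / (qPoch q q p.1 * qPoch q q p.2.1 * qPoch (b*t) q p.2.1)

noncomputable def M' (q : ℂ) (A : ℤ → ℂ) (b t x : ℂ) (p : (ℕ × ℕ) × ℕ) : ℂ :=
  A ((p.1.1 : ℤ) - (p.1.2 : ℤ)) * x ^ p.1.2 / qPoch q q p.1.1 *
    (if p.2 ≤ p.1.2 then tau q (q ^ p.1.1) b t p.1.2 p.2 else 0)

def emb (p : ℕ × ℕ × ℕ) : (ℕ × ℕ) × ℕ := ((p.1 + p.2.2, p.2.1 + p.2.2), p.2.2)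

lemma emb_inj : Function.Injective emb := by
  rintro ⟨i, j, m⟩ ⟨i', j', m'⟩ h
  simp only [emb, Prod.mk.injEq] at h ⊢
  omega

lemma M_emb (q : ℂ) (hq1 : ‖q‖ < 1) (A : ℤ → ℂ) (b t x : ℂ) (p : ℕ × ℕ × ℕ) :
    M' q A b t x (emb p) = M q A b t x p := by
  obtain ⟨i, j, m⟩ := p
  have h := V_pow q m i
  have e1 := Q_ne q hq1 i
  have e2 := Q_ne q hq1 (i+m)
  have hV : V q (q ^ (i+m)) m = (-1) ^ m * q ^ (m.choose 2) * qPoch q q (i+m) / qPoch q q i :=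
    eq_div_of_mul_eq e1 h
  have ha : ((i + m : ℕ) : ℤ) - ((j + m : ℕ) : ℤ) = (i:ℤ) - j := by push_cast; ring
  simp only [M', M, emb, tau, ha, hV, E, Nat.add_sub_cancel, Nat.le_add_left, if_true]
  field_simp

lemma M_supp (q : ℂ) (A : ℤ → ℂ) (b t x : ℂ) :
    Function.support (M' q A b t x) ⊆ Set.range emb := by
  rintro ⟨⟨I, n⟩, m⟩ h
  have h1 : m ≤ n := by
    by_contra hc
    exact h (by simp [M', hc])
  have h2 : m ≤ I := by
    by_contra hc
    exact h (by simp [M', tau, V_pow_zero q (not_le.1 hc)])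
  exact ⟨(I - m, n - m, m), by simp [emb, h1, h2]⟩

lemma M'_sum (q : ℂ) (hq : q ≠ 0) (hq1 : ‖q‖ < 1) (A : ℤ → ℂ) (b t x : ℂ)
    (hbt : ∀ m : ℕ, b * t ≠ q ^ (-(m : ℤ))) (p : ℕ × ℕ) :
    ∑' m, M' q A b t x (p, m) = A ((p.1 : ℤ) - (p.2 : ℤ)) * q ^ (p.1 * p.2) * x ^ p.2 *
      qPoch (b * q ^ (-(p.1 : ℤ))) q p.2 * qPoch t q p.2 /
      (qPoch q q p.1 * qPoch q q p.2 * qPoch (b * t) q p.2) := by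
  obtain ⟨I, n⟩ := p
  simp only [M']
  rw [tsum_mul_left, tsum_eq_sum (s := Finset.range (n+1))]
  · rw [Finset.sum_congr rfl (g := fun m => tau q (q ^ I) b t n m), saal q _ b t hq hq1 hbt,
      ← P_neg q b hq]
    · have e1 := Q_ne q hq1 I
      have e2 := Q_ne q hq1 n
      have e3 := P_ne q (b*t) hq hbt n
      field_simp
    · intro m hm
      rw [if_pos (by simp at hm; omega)]
  · intro m hm
    rw [if_neg (by simp at hm; omega)]

noncomputable def H (q : ℂ) (A : ℤ → ℂ) (b t x : ℂ) (p : ℕ × ℕ × ℕ) : ℂ :=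
  A ((p.1 : ℤ) - (p.2.1 : ℤ)) *
      (t * q ^ (p.1 + p.2.1)) ^ p.2.2 * x ^ p.2.1 *
      qPoch (q ^ (-(p.2.1 : ℤ))) q p.2.2 * qPoch b q p.2.1 /
      (qPoch q q p.1 * qPoch q q p.2.1 * qPoch q q p.2.2 * qPoch x q p.2.2 *
        qPoch (b * t) q p.2.1)

noncomputable def K (q : ℂ) (A : ℤ → ℂ) (b t x : ℂ) (p : (ℕ × ℕ × ℕ) × ℕ) : ℂ :=
  H q A b t x p.1 * qPoch x q p.1.2.2 * (E q p.2 * (x * q ^ p.1.2.2) ^ p.2)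

lemma K_summable (q : ℂ) (hq1 : ‖q‖ < 1) (A : ℤ → ℂ) (b t x : ℂ)
    (h : Summable fun p => ‖H q A b t x p‖) : Summable (K q A b t x) := by
  obtain ⟨C, hC⟩ := P_bdd q x hq1
  have hs := (h.mul_right C).mul_of_nonneg (E_summable q x hq1)
    (fun p => mul_nonneg (norm_nonneg _) ((norm_nonneg _).trans (hC 0))) (fun _ => norm_nonneg _)
  refine Summable.of_norm_bounded hs ?_
  rintro ⟨⟨i, j, k⟩, m⟩
  simp only [K]
  rw [norm_mul, norm_mul]
  have h1 : ‖E q m * (x * q ^ k) ^ m‖ ≤ ‖E q m * x ^ m‖ := by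
    rw [norm_mul, norm_mul, mul_pow, norm_mul]
    have : ‖(q ^ k) ^ m‖ ≤ 1 := by
      rw [← pow_mul, norm_pow]; exact pow_le_one₀ (norm_nonneg _) hq1.le
    have h2 := mul_le_mul_of_nonneg_left this (norm_nonneg (x ^ m))
    rw [mul_one] at h2
    exact mul_le_mul_of_nonneg_left h2 (norm_nonneg _)
  have h0 := (norm_nonneg _).trans (hC 0)
  gcongr
  exact hC k

def eqv : (ℕ × ℕ × ℕ) × ℕ ≃ (ℕ × ℕ × ℕ) × ℕ where
  toFun p := ((p.1.1, p.1.2.1, p.2), p.1.2.2)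
  invFun p := ((p.1.1, p.1.2.1, p.2), p.1.2.2)
  left_inv _ := rfl
  right_inv _ := rfl

lemma K_sum (q : ℂ) (hq : q ≠ 0) (hq1 : ‖q‖ < 1) (A : ℤ → ℂ) (b t x : ℂ)
    (hbt : ∀ m : ℕ, b * t ≠ q ^ (-(m : ℤ))) (hx : ∀ m : ℕ, x ≠ q ^ (-(m : ℤ)))
    (p : ℕ × ℕ × ℕ) :
    ∑' k, K q A b t x (eqv (p, k)) = M q A b t x p := by
  obtain ⟨i, j, m⟩ := p
  have key : ∀ k, K q A b t x (eqv ((i, j, m), k)) =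
      (A ((i : ℤ) - (j : ℤ)) * x ^ (j + m) * E q m * qPoch b q j /
        (qPoch q q i * qPoch q q j * qPoch (b*t) q j)) *
      (V q (q ^ j) k / qPoch q q k * (t * q ^ (i+m)) ^ k) := by
    intro k
    have hP := P_neg q 1 hq j k
    simp only [one_mul] at hP
    have hV : V q (q ^ j) k = q ^ (j*k) * qPoch (q ^ (-(j:ℤ))) q k := hP.symm
    rw [hV]
    have e1 := Q_ne q hq1 i
    have e2 := Q_ne q hq1 j
    have e3 := Q_ne q hq1 k
    have e4 := P_ne q (b*t) hq hbt j
    have e5 := P_ne q x hq hx k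
    simp only [K, H, eqv, Equiv.coe_fn_mk]
    generalize qPoch (q ^ (-(j:ℤ))) q k = y at *
    field_simp
    ring
  simp_rw [key]
  rw [tsum_mul_left, tsum_eq_sum (s := Finset.range (j+1)), qbin q _ hq1 j _ (by omega)]
  · simp only [M]; ring
  · intro k hk
    rw [V_pow_zero q (by simp at hk; omega)]; simp

lemma K_sum' (q : ℂ) (hq1 : ‖q‖ < 1) (A : ℤ → ℂ) (b t x : ℂ) (p : ℕ × ℕ × ℕ) :
    ∑' m, K q A b t x (p, m) = qPochInf x q * H q A b t x p := by
  simp only [K]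
  rw [tsum_mul_left, ← f_eq q x hq1, f_iter q x hq1 p.2.2]
  simp only [f]
  ring

end QAux

theorem stmt2 (q : ℂ) (hq0 : 0 < ‖q‖) (hq1 : ‖q‖ < 1)
    (A : ℤ → ℂ) (b t x : ℂ)
    (hbt : ∀ m : ℕ, b * t ≠ q ^ (-(m : ℤ)))
    (hx : ∀ m : ℕ, x ≠ q ^ (-(m : ℤ)))
    (h1 : Summable (fun p : ℕ × ℕ => ‖A ((p.1 : ℤ) - (p.2 : ℤ)) * q ^ (p.1 * p.2) * x ^ p.2 *
      qPoch (b * q ^ (-(p.1 : ℤ))) q p.2 * qPoch t q p.2 /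
      (qPoch q q p.1 * qPoch q q p.2 * qPoch (b * t) q p.2)‖))
    (h2 : Summable (fun p : ℕ × ℕ × ℕ => ‖A ((p.1 : ℤ) - (p.2.1 : ℤ)) *
      (t * q ^ (p.1 + p.2.1)) ^ p.2.2 * x ^ p.2.1 *
      qPoch (q ^ (-(p.2.1 : ℤ))) q p.2.2 * qPoch b q p.2.1 /
      (qPoch q q p.1 * qPoch q q p.2.1 * qPoch q q p.2.2 * qPoch x q p.2.2 *
        qPoch (b * t) q p.2.1)‖)) :
    ∑' p : ℕ × ℕ, A ((p.1 : ℤ) - (p.2 : ℤ)) * q ^ (p.1 * p.2) * x ^ p.2 *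
      qPoch (b * q ^ (-(p.1 : ℤ))) q p.2 * qPoch t q p.2 /
      (qPoch q q p.1 * qPoch q q p.2 * qPoch (b * t) q p.2)
    = qPochInf x q * ∑' p : ℕ × ℕ × ℕ, A ((p.1 : ℤ) - (p.2.1 : ℤ)) *
      (t * q ^ (p.1 + p.2.1)) ^ p.2.2 * x ^ p.2.1 *
      qPoch (q ^ (-(p.2.1 : ℤ))) q p.2.2 * qPoch b q p.2.1 /
      (qPoch q q p.1 * qPoch q q p.2.1 * qPoch q q p.2.2 * qPoch x q p.2.2 *
        qPoch (b * t) q p.2.1) := by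
  have hq : q ≠ 0 := norm_pos_iff.1 hq0
  have hK := QAux.K_summable q hq1 A b t x h2
  have hK2 : Summable fun p => QAux.K q A b t x (QAux.eqv p) := (QAux.eqv.summable_iff).2 hK
  have hR : qPochInf x q * ∑' p, QAux.H q A b t x p = ∑' p, QAux.M q A b t x p := by
    rw [← tsum_mul_left]
    simp_rw [← QAux.K_sum' q hq1 A b t x, ← QAux.K_sum q hq hq1 A b t x hbt hx]
    rw [← hK.tsum_prod, ← hK2.tsum_prod]
    exact (QAux.eqv.tsum_eq _).symm
  have hMs : Summable (QAux.M q A b t x) := by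
    have := hK2.prod
    simpa only [QAux.K_sum q hq hq1 A b t x hbt hx] using this
  have hM : QAux.M' q A b t x ∘ QAux.emb = QAux.M q A b t x :=
    funext (QAux.M_emb q hq1 A b t x)
  have hM's : Summable (QAux.M' q A b t x) := by
    rw [← QAux.emb_inj.summable_iff, hM]
    · exact hMs
    · intro y hy
      by_contra hc
      exact hy (QAux.M_supp q A b t x hc)
  have hL := QAux.emb_inj.tsum_eq (QAux.M_supp q A b t x)
  simp_rw [QAux.M_emb q hq1 A b t x] at hL
  refine Eq.trans ?_ hR.symm
  rw [hL, hM's.tsum_prod]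
  exact tsum_congr fun p => (QAux.M'_sum q hq hq1 A b t x hbt p).symm
end

section
/- Let q ∈ ℂ with 0 < |q| < 1, let A : ℤ → ℂ be any sequence, and let x ∈ ℂ with x ≠ q^{-m} for every m ∈ ℕ. Assume the sequence n ↦ A_n / (q;q)_n is absolutely summable over ℕ and the family (i,k,j) ↦ x^k q^{ik} (-1)^k q^{k(k-1)/2} A_{i-k-j} x^j / ((q;q)_i (q;q)_k (x;q)_k (q;q)_j) indexed by ℕ×ℕ×ℕ is absolutely summable. Then ∑_{n≥0} A_n / (q;q)_n = (x;q)_∞ · ∑_{i,k≥0} [x^k q^{ik} τ(k) / ((q;q)_i (q;q)_k (x;q)_k)] · ∑_{j≥0} A_{i-k-j} x^j / (q;q)_j. -/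
/-- `τ(n) = (-1)^n q^{n(n-1)/2}` for `n : ℕ`. -/
noncomputable def qTau (q : ℂ) (n : ℕ) : ℂ := (-1 : ℂ) ^ n * q ^ (n * (n - 1) / 2)



lemma aux_tau_succ (q : ℂ) (n : ℕ) : qTau q (n+1) = - q^n * qTau q n := by
  unfold qTau
  rw [Nat.triangle_succ, pow_add, pow_succ]; ring

lemma aux_qPoch_succ (a q : ℂ) (n : ℕ) : qPoch a q (n+1) = qPoch a q n * (1 - a * q^n) := by
  unfold qPoch; rw [Finset.prod_range_succ]

lemma aux_qPoch_succ' (a q : ℂ) (n : ℕ) : qPoch a q (n+1) = (1 - a) * qPoch (a*q) q n := by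
  unfold qPoch; rw [Finset.prod_range_succ', mul_comm]
  simp only [pow_zero, mul_one]
  congr 1
  apply Finset.prod_congr rfl
  intro k _
  rw [pow_succ]; ring

lemma aux_pow_ne {q : ℂ} (hq1 : ‖q‖ < 1) (n : ℕ) : 1 - q^(n+1) ≠ 0 := by
  intro h
  have h1 : q^(n+1) = 1 := (sub_eq_zero.mp h).symm
  have h2 : ‖q‖^(n+1) < 1 := pow_lt_one₀ (norm_nonneg _) hq1 (Nat.succ_ne_zero n)
  rw [← norm_pow, h1] at h2
  simp at h2

lemma aux_qq_ne {q : ℂ} (hq1 : ‖q‖ < 1) (n : ℕ) : qPoch q q n ≠ 0 := by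
  unfold qPoch
  rw [Finset.prod_ne_zero_iff]
  intro k _
  have := aux_pow_ne hq1 k
  rwa [pow_succ, mul_comm] at this

/-- reciprocal of `(q;q)_n`. -/
noncomputable def bN (q : ℂ) (n : ℕ) : ℂ := (qPoch q q n)⁻¹

/-- reciprocal of `(q;q)_n`, zero for negative index. -/
noncomputable def bZ (q : ℂ) (n : ℤ) : ℂ := if n < 0 then 0 else bN q n.toNat

lemma aux_bN_zero (q : ℂ) : bN q 0 = 1 := by simp [bN, qPoch]

lemma aux_bN_succ {q : ℂ} (hq1 : ‖q‖ < 1) (n : ℕ) : bN q (n+1) * (1 - q^(n+1)) = bN q n := by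
  have := aux_pow_ne hq1 n
  have h2 := aux_qq_ne hq1 n
  unfold bN
  rw [aux_qPoch_succ, ← pow_succ']
  field_simp

lemma aux_bZ_nat (q : ℂ) (n : ℕ) : bZ q n = bN q n := by
  simp [bZ]

lemma aux_bZ_neg (q : ℂ) {n : ℤ} (h : n < 0) : bZ q n = 0 := by
  simp [bZ, h]

lemma aux_bZ_succ {q : ℂ} (hq1 : ‖q‖ < 1) (n : ℤ) : bZ q (n+1) * (1 - q^(n+1)) = bZ q n := by
  rcases lt_or_ge n 0 with h | h
  · rw [aux_bZ_neg q h]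
    rcases lt_or_ge (n+1) 0 with h' | h'
    · rw [aux_bZ_neg q h']; simp
    · have : n + 1 = 0 := by omega
      rw [this]; simp
  · obtain ⟨m, rfl⟩ := Int.eq_ofNat_of_zero_le h
    have := aux_bN_succ hq1 m
    rw [aux_bZ_nat, ← this, ← aux_bZ_nat]
    norm_cast

/-- finite q-binomial theorem -/
lemma aux_qbinom {q : ℂ} (hq1 : ‖q‖ < 1) (r : ℕ) : ∀ y : ℂ,
    ∑ p ∈ Finset.HasAntidiagonal.antidiagonal r, y^p.1 * qTau q p.1 * bN q p.1 * bN q p.2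
      = qPoch y q r * bN q r := by
  induction r with
  | zero => intro y; simp [bN, qTau, qPoch]
  | succ r ih =>
    intro y
    apply mul_left_cancel₀ (aux_pow_ne hq1 r)
    have e : (1 - q^(r+1)) * ∑ p ∈ Finset.HasAntidiagonal.antidiagonal (r+1), y^p.1 * qTau q p.1 * bN q p.1 * bN q p.2
       = ∑ p ∈ Finset.HasAntidiagonal.antidiagonal (r+1), y^p.1 * qTau q p.1 * (bN q p.1 * (1 - q^p.1)) * bN q p.2
       + ∑ p ∈ Finset.HasAntidiagonal.antidiagonal (r+1), (y*q)^p.1 * qTau q p.1 * bN q p.1 * (bN q p.2 * (1 - q^p.2)) := by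
      rw [Finset.mul_sum, ← Finset.sum_add_distrib]
      apply Finset.sum_congr rfl
      intro p hp
      rw [← Finset.HasAntidiagonal.mem_antidiagonal.mp hp, pow_add, mul_pow]; ring
    rw [e, Finset.Nat.sum_antidiagonal_succ, Finset.Nat.sum_antidiagonal_succ']
    simp only [aux_bN_succ hq1, pow_zero, sub_self, mul_zero, zero_mul, zero_add]
    rw [ih (y*q)]
    have e2 : ∑ p ∈ Finset.HasAntidiagonal.antidiagonal r, y^(p.1+1) * qTau q (p.1+1) * bN q p.1 * bN q p.2
       = -y * (qPoch (y*q) q r * bN q r) := by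
      rw [← ih (y*q), Finset.mul_sum]
      apply Finset.sum_congr rfl
      intro p _
      rw [aux_tau_succ, mul_pow]; ring
    rw [e2, aux_qPoch_succ', ← aux_bN_succ hq1 r]
    ring

/-- telescoping sum -/
lemma aux_tele {q : ℂ} (hq0 : q ≠ 0) (hq1 : ‖q‖ < 1) (N : ℤ) (m : ℕ) (R : ℕ) : ∀ l : ℕ, R + l = m →
    (1 - q^m) * ∑ r ∈ Finset.range (R+1),
        qTau q (m-r) * bN q (m-r) * (qPoch (q^(N+m)) q r * bN q r) * bZ q (N+r)
      = qTau q l * qPoch (q^(N+m) * q) q R * bN q R * (bN q l * (1 - q^l)) * bZ q (N+R) := by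
  induction R with
  | zero =>
    intro l hl
    obtain rfl : l = m := by omega
    simp [qPoch, aux_bN_zero]; ring
  | succ R ih =>
    intro l hl
    rw [Finset.sum_range_succ, mul_add, ih (l+1) (by omega), aux_bN_succ hq1, aux_tau_succ]
    have : m - (R+1) = l := by omega
    rw [this, aux_qPoch_succ', aux_qPoch_succ, ← aux_bN_succ hq1 R]
    have hz : bZ q (N + (R:ℕ)) = bZ q (N + ((R+1:ℕ):ℤ)) * (1 - q^N * q^(R+1)) := by
      rw [← aux_bZ_succ hq1, zpow_add₀ hq0, zpow_add₀ hq0]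
      push_cast
      rw [← add_assoc, pow_succ, zpow_natCast, zpow_one]; ring_nf
    rw [hz]
    have hM : q^(N+(m:ℤ)) = q^N * (q * q^R * q^l) := by
      rw [zpow_add₀ hq0, ← hl, zpow_natCast, pow_add, pow_succ]; ring
    have hm : q^m = q * q^R * q^l := by rw [← hl, pow_add, pow_succ]; ring
    rw [hM, hm, pow_succ]
    ring

lemma aux_coef {q : ℂ} (hq0 : q ≠ 0) (hq1 : ‖q‖ < 1) (N : ℤ) (m : ℕ) :
    ∑ p ∈ Finset.HasAntidiagonal.antidiagonal m,
        qTau q p.2 * bN q p.2 * (qPoch (q^(N+m)) q p.1 * bN q p.1) * bZ q (N+p.1)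
      = if m = 0 then bZ q N else 0 := by
  rcases m with _ | m
  · simp [bN, qPoch, qTau]
  · have := aux_tele hq0 hq1 N (m+1) (m+1) 0 rfl
    rw [if_neg (Nat.succ_ne_zero m)]
    rw [Finset.Nat.sum_antidiagonal_eq_sum_range_succ_mk]
    simp only [pow_zero, sub_self, mul_zero, zero_mul] at this
    exact (mul_eq_zero.mp this).resolve_left (aux_pow_ne hq1 m)

lemma aux_multipliable {q : ℂ} (hq1 : ‖q‖ < 1) (z : ℂ) : Multipliable (fun k : ℕ => 1 - z * q^k) := by
  have : Summable (fun k : ℕ => ‖-(z * q^k)‖) := by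
    simp only [norm_neg, norm_mul, norm_pow]
    exact (summable_geometric_of_lt_one (norm_nonneg _) hq1).mul_left _
  simpa [sub_eq_add_neg] using multipliable_one_add_of_summable this

lemma aux_tendsto {q : ℂ} (hq1 : ‖q‖ < 1) (z : ℂ) :
    Filter.Tendsto (fun n => qPoch z q n) Filter.atTop (nhds (qPochInf z q)) := 
  (aux_multipliable hq1 z).hasProd.tendsto_prod_nat

lemma aux_qq_lim_ne {q : ℂ} (hq1 : ‖q‖ < 1) : qPochInf q q ≠ 0 := by
  unfold qPochInf
  have : Summable (fun k : ℕ => ‖-(q * q^k)‖) := by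
    simp only [norm_neg, norm_mul, norm_pow]
    exact (summable_geometric_of_lt_one (norm_nonneg _) hq1).mul_left _
  have h := tprod_one_add_ne_zero_of_summable (f := fun k : ℕ => -(q * q^k)) (by
    intro k
    have := aux_pow_ne hq1 k
    rwa [pow_succ, mul_comm, sub_eq_add_neg] at this) this
  simpa [sub_eq_add_neg] using h

lemma aux_bdd {q : ℂ} (hq1 : ‖q‖ < 1) : ∃ C : ℝ, 0 < C ∧ ∀ n, ‖bN q n‖ ≤ C := by
  have h : Filter.Tendsto (fun n => bN q n) Filter.atTop (nhds (qPochInf q q)⁻¹) :=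
    (aux_tendsto hq1 q).inv₀ (aux_qq_lim_ne hq1)
  obtain ⟨C, hC⟩ := (Metric.isBounded_range_of_tendsto _ h).exists_norm_le
  refine ⟨max C 1, by positivity, fun n => (hC _ ⟨n, rfl⟩).trans (le_max_left _ _)⟩

lemma aux_bdd' {q : ℂ} (hq1 : ‖q‖ < 1) : ∃ C : ℝ, 0 < C ∧ ∀ n, ‖qPoch q q n‖ ≤ C := by
  obtain ⟨C, hC⟩ := (Metric.isBounded_range_of_tendsto _ (aux_tendsto hq1 q)).exists_norm_le
  refine ⟨max C 1, by positivity, fun n => (hC _ ⟨n, rfl⟩).trans (le_max_left _ _)⟩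

lemma aux_tau_le {q : ℂ} (hq1 : ‖q‖ < 1) (n : ℕ) : ‖qTau q n‖ ≤ 1 := by
  unfold qTau
  simp only [norm_mul, norm_pow, norm_neg, norm_one, one_pow, one_mul]
  exact pow_le_one₀ (norm_nonneg _) hq1.le

lemma aux_E_bound {q : ℂ} (hq1 : ‖q‖ < 1) : ∃ C : ℝ, 0 < C ∧ ∀ (z : ℂ) (l : ℕ),
    ‖qTau q l * bN q l * z^l‖ ≤ C * ‖z‖^l := by
  obtain ⟨C, hC, hb⟩ := aux_bdd hq1
  refine ⟨C, hC, fun z l => ?_⟩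
  rw [norm_mul, norm_mul, norm_pow]
  gcongr
  calc _ ≤ 1 * C := by gcongr; exacts [aux_tau_le hq1 l, hb l]
    _ = C := one_mul C

lemma aux_E_summable {q : ℂ} (hq1 : ‖q‖ < 1) {z : ℂ} (hz : ‖z‖ < 1) :
    Summable (fun l : ℕ => qTau q l * bN q l * z^l) := by
  obtain ⟨C, hC, hb⟩ := aux_E_bound hq1
  exact Summable.of_norm_bounded ((summable_geometric_of_lt_one (norm_nonneg _) hz).mul_left C) (hb z)

lemma aux_E_func {q : ℂ} (hq1 : ‖q‖ < 1) {z : ℂ} (hz : ‖z‖ < 1) :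
    ∑' l : ℕ, qTau q l * bN q l * z^l = (1 - z) * ∑' l : ℕ, qTau q l * bN q l * (z*q)^l := by
  have hz' : ‖z * q‖ < 1 := by
    rw [norm_mul]; exact mul_lt_one_of_nonneg_of_lt_one_left (norm_nonneg _) hz hq1.le
  have s1 := aux_E_summable hq1 hz
  have s2 := aux_E_summable hq1 hz'
  have e : ∑' l : ℕ, qTau q l * bN q l * z^l - ∑' l : ℕ, qTau q l * bN q l * (z*q)^l
     = -z * ∑' l : ℕ, qTau q l * bN q l * (z*q)^l := by
    rw [← s1.tsum_sub s2, (s1.sub s2).tsum_eq_zero_add, ← tsum_mul_left]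
    simp only [pow_zero, sub_self, zero_add]
    apply tsum_congr
    intro l
    rw [← aux_bN_succ hq1 l, aux_tau_succ, mul_pow, mul_pow, pow_succ, pow_succ]; ring
  linear_combination e

lemma aux_E_iter {q : ℂ} (hq1 : ‖q‖ < 1) (n : ℕ) : ∀ {z : ℂ} (hz : ‖z‖ < 1),
    ∑' l : ℕ, qTau q l * bN q l * z^l = qPoch z q n * ∑' l : ℕ, qTau q l * bN q l * (z*q^n)^l := by
  induction n with
  | zero => intro z hz; simp [qPoch]
  | succ n ih =>
    intro z hz
    have hz' : ‖z * q‖ < 1 := by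
      rw [norm_mul]; exact mul_lt_one_of_nonneg_of_lt_one_left (norm_nonneg _) hz hq1.le
    rw [aux_E_func hq1 hz, ih hz', aux_qPoch_succ', pow_succ']
    simp only [mul_assoc]

lemma aux_E {q : ℂ} (hq1 : ‖q‖ < 1) {z : ℂ} (hz : ‖z‖ < 1) :
    ∑' l : ℕ, qTau q l * bN q l * z^l = qPochInf z q := by
  obtain ⟨C, hC, hb⟩ := aux_E_bound hq1
  have h1 : Filter.Tendsto (fun n : ℕ => ∑' l : ℕ, qTau q l * bN q l * (z*q^n)^l) Filter.atTop
      (nhds (∑' l : ℕ, qTau q l * bN q l * (0:ℂ)^l)) := by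
    apply tendsto_tsum_of_dominated_convergence
      ((summable_geometric_of_lt_one (norm_nonneg _) hz).mul_left C)
    · intro l
      apply Filter.Tendsto.const_mul
      apply Filter.Tendsto.pow
      have := (tendsto_pow_atTop_nhds_zero_of_norm_lt_one hq1).const_mul z
      simpa using this
    · refine Filter.Eventually.of_forall fun n l => (hb _ _).trans ?_
      gcongr
      rw [norm_mul, norm_pow]
      exact mul_le_of_le_one_right (norm_nonneg _) (pow_le_one₀ (norm_nonneg _) hq1.le)
  have h0 : ∑' l : ℕ, qTau q l * bN q l * (0:ℂ)^l = 1 := by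
    rw [tsum_eq_single 0]
    · simp [qTau, bN, qPoch]
    · intro l hl; simp [hl]
  rw [h0] at h1
  have h2 := (aux_tendsto hq1 z).mul h1
  rw [mul_one] at h2
  refine tendsto_nhds_unique ?_ h2
  refine tendsto_const_nhds.congr fun n => aux_E_iter hq1 n hz

/-- the auxiliary triple-sum term -/
noncomputable def auxV (q x : ℂ) (N : ℤ) (p : (ℕ × ℕ) × ℕ) : ℂ :=
  x^(p.1.1+p.1.2+p.2) * (q^(N+((p.1.1+p.1.2+p.2:ℕ):ℤ)))^p.1.1 * qTau q p.1.1 * qTau q p.2 *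
    bZ q (N+((p.1.1+p.1.2:ℕ):ℤ)) * bN q p.1.1 * bN q p.1.2 * bN q p.2

/-- the auxiliary double-sum term -/
noncomputable def auxW (q x : ℂ) (N : ℤ) (p : ℕ × ℕ) : ℂ :=
  x^(p.1+p.2) * (q^(N+((p.1+p.2:ℕ):ℤ)))^p.1 * qTau q p.1 *
    bZ q (N+((p.1+p.2:ℕ):ℤ)) * bN q p.1 * bN q p.2 * qPochInf (x * q^p.1) q

lemma auxV_summable {q x : ℂ} (hq1 : ‖q‖ < 1) (hx : ‖x‖ < 1) (N : ℤ) :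
    Summable (auxV q x N) := by
  obtain ⟨C, hC, hb⟩ := aux_bdd hq1
  have g := summable_geometric_of_lt_one (norm_nonneg x) hx
  have gg : Summable (fun p : ℕ × ℕ => ‖x‖^p.1 * ‖x‖^p.2) :=
    g.mul_of_nonneg g (fun _ => by positivity) (fun _ => by positivity)
  have ggg : Summable (fun p : (ℕ × ℕ) × ℕ => (‖x‖^p.1.1 * ‖x‖^p.1.2) * ‖x‖^p.2) :=
    gg.mul_of_nonneg g (fun _ => by positivity) (fun _ => by positivity)
  refine Summable.of_norm_bounded (ggg.mul_left (C*C*C*C)) ?_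
  rintro ⟨⟨k, j⟩, l⟩
  simp only [auxV]
  rcases lt_or_ge (N + ((k+j:ℕ):ℤ)) 0 with h | h
  · rw [aux_bZ_neg q h]; simp; positivity
  · obtain ⟨n, hn⟩ := Int.eq_ofNat_of_zero_le h
    have hn' : N + ((k+j+l:ℕ):ℤ) = ((n + l : ℕ):ℤ) := by push_cast at hn ⊢; omega
    rw [hn, hn', aux_bZ_nat, zpow_natCast]
    simp only [norm_mul]
    have e1 : ‖(q^(n+l))^k‖ ≤ 1 := by
      rw [norm_pow, norm_pow]
      exact pow_le_one₀ (by positivity) (pow_le_one₀ (norm_nonneg _) hq1.le)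
    calc _ ≤ ‖x^(k+j+l)‖ * 1 * 1 * 1 * C * C * C * C := by
          gcongr
          exacts [aux_tau_le hq1 k, aux_tau_le hq1 l, hb n, hb k, hb j, hb l]
      _ = _ := by rw [norm_pow, pow_add, pow_add]; ring

lemma aux_fiber (f : ℕ × ℕ → ℂ) {a : ℂ} (h : HasSum f a) :
    HasSum (fun n => ∑ p ∈ Finset.HasAntidiagonal.antidiagonal n, f p) a := by
  have := h.tsum_fiberwise (fun p : ℕ × ℕ => p.1 + p.2)
  refine (congrArg (fun g => HasSum g a) (funext fun n => ?_)).mpr this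
  rw [← Finset.tsum_subtype']
  have : ((Finset.HasAntidiagonal.antidiagonal n : Finset (ℕ × ℕ)) : Set (ℕ × ℕ))
      = (fun p : ℕ × ℕ => p.1 + p.2) ⁻¹' {n} := by
    ext p; simp
  rw [this]

lemma aux_fiber3 (f : (ℕ × ℕ) × ℕ → ℂ) {a : ℂ} (h : HasSum f a) :
    HasSum (fun c : ℕ × ℕ => ∑ p ∈ Finset.HasAntidiagonal.antidiagonal c.1, f (p, c.2)) a := by
  have := h.tsum_fiberwise (fun p : (ℕ × ℕ) × ℕ => (p.1.1 + p.1.2, p.2))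
  refine (congrArg (fun g => HasSum g a) (funext fun c => ?_)).mpr this
  have e : (((Finset.HasAntidiagonal.antidiagonal c.1) ×ˢ {c.2} : Finset ((ℕ × ℕ) × ℕ)) : Set ((ℕ × ℕ) × ℕ))
      = (fun p : (ℕ × ℕ) × ℕ => (p.1.1 + p.1.2, p.2)) ⁻¹' {c} := by
    ext p; simp [Prod.ext_iff]; intro _; exact eq_comm
  rw [← e, Finset.tsum_subtype', Finset.sum_product]
  simp

lemma auxV_hasSum {q x : ℂ} (hq0 : q ≠ 0) (hq1 : ‖q‖ < 1) (hx : ‖x‖ < 1) (N : ℤ) :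
    HasSum (auxV q x N) (bZ q N) := by
  have h := (auxV_summable hq1 hx N).hasSum
  have h2 := aux_fiber _ (aux_fiber3 _ h)
  have e : (fun n : ℕ => ∑ c ∈ Finset.HasAntidiagonal.antidiagonal n,
      ∑ p ∈ Finset.HasAntidiagonal.antidiagonal c.1, auxV q x N (p, c.2))
      = fun m => if m = 0 then bZ q N else 0 := by
    funext m
    have : ∀ c ∈ Finset.HasAntidiagonal.antidiagonal m,
        ∑ p ∈ Finset.HasAntidiagonal.antidiagonal c.1, auxV q x N (p, c.2)
        = x^m * (qTau q c.2 * bN q c.2 * (qPoch (q^(N+m)) q c.1 * bN q c.1) * bZ q (N+c.1)) := by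
      intro c hc
      have hc := Finset.HasAntidiagonal.mem_antidiagonal.mp hc
      rw [← aux_qbinom hq1, Finset.mul_sum, Finset.sum_mul, Finset.mul_sum]
      apply Finset.sum_congr rfl
      intro p hp
      have hp := Finset.HasAntidiagonal.mem_antidiagonal.mp hp
      simp only [auxV]
      rw [hp, hc]; ring
    rw [Finset.sum_congr rfl this, ← Finset.mul_sum, aux_coef hq0 hq1]
    split_ifs with hm
    · simp [hm]
    · simp
  rw [e] at h2
  have h3 := hasSum_ite_eq (0:ℕ) (bZ q N)
  rw [h2.unique h3] at h
  exact h

lemma auxW_hasSum {q x : ℂ} (hq0 : q ≠ 0) (hq1 : ‖q‖ < 1) (hx : ‖x‖ < 1) (N : ℤ) :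
    HasSum (auxW q x N) (bZ q N) := by
  refine (auxV_hasSum hq0 hq1 hx N).prod_fiberwise ?_
  rintro ⟨k, j⟩
  have hz : ‖x * q^k‖ < 1 := by
    rw [norm_mul, norm_pow]
    exact mul_lt_one_of_nonneg_of_lt_one_left (norm_nonneg _) hx (pow_le_one₀ (norm_nonneg _) hq1.le)
  have h := (aux_E_summable hq1 hz).hasSum
  rw [aux_E hq1 hz] at h
  have h2 := h.mul_left (x^(k+j) * (q^(N+((k+j:ℕ):ℤ)))^k * qTau q k *
    bZ q (N+((k+j:ℕ):ℤ)) * bN q k * bN q j)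
  refine (congrArg (fun g => HasSum g _) (funext fun l => ?_)).mpr h2
  simp only [auxV]
  have : q^(N+((k+j+l:ℕ):ℤ)) = q^(N+((k+j:ℕ):ℤ)) * q^l := by
    rw [← zpow_natCast q l, ← zpow_add₀ hq0]; push_cast; ring_nf
  rw [this, pow_add x, mul_pow, mul_pow, ← pow_mul, ← pow_mul, mul_comm l k]
  ring

lemma aux_shift {q x : ℂ} (hq1 : ‖q‖ < 1) (hx : ‖x‖ < 1) (k : ℕ) :
    qPochInf x q = qPoch x q k * qPochInf (x * q^k) q := by
  have hz : ‖x * q^k‖ < 1 := by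
    rw [norm_mul, norm_pow]
    exact mul_lt_one_of_nonneg_of_lt_one_left (norm_nonneg _) hx (pow_le_one₀ (norm_nonneg _) hq1.le)
  rw [← aux_E hq1 hx, ← aux_E hq1 hz]
  exact aux_E_iter hq1 k hx

lemma aux_x_ne {q x : ℂ} (hq1 : ‖q‖ < 1) (hx : ‖x‖ < 1) (k : ℕ) : qPoch x q k ≠ 0 := by
  unfold qPoch
  rw [Finset.prod_ne_zero_iff]
  intro n _ h
  have hz : ‖x * q^n‖ < 1 := by
    rw [norm_mul, norm_pow]
    exact mul_lt_one_of_nonneg_of_lt_one_left (norm_nonneg _) hx (pow_le_one₀ (norm_nonneg _) hq1.le)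
  rw [← sub_eq_zero.mp h] at hz
  simp at hz

/-- the summand of the triple family -/
noncomputable def auxT (q x : ℂ) (A : ℤ → ℂ) (p : ℕ × ℕ × ℕ) : ℂ :=
  x ^ p.2.1 * q ^ (p.1 * p.2.1) *
      (-1 : ℂ) ^ p.2.1 * q ^ (p.2.1 * (p.2.1 - 1) / 2) *
      A ((p.1 : ℤ) - (p.2.1 : ℤ) - (p.2.2 : ℤ)) * x ^ p.2.2 /
      (qPoch q q p.1 * qPoch q q p.2.1 * qPoch x q p.2.1 * qPoch q q p.2.2)

lemma aux_rhs (q x : ℂ) (A : ℤ → ℂ) (h : Summable (auxT q x A)) :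
    ∑' p : ℕ × ℕ,
        (x ^ p.2 * q ^ (p.1 * p.2) * qTau q p.2 /
          (qPoch q q p.1 * qPoch q q p.2 * qPoch x q p.2)) *
        ∑' j : ℕ, A ((p.1 : ℤ) - (p.2 : ℤ) - (j : ℤ)) * x ^ j / qPoch q q j
      = ∑' p, auxT q x A p := by
  rw [← (Equiv.prodAssoc ℕ ℕ ℕ).tsum_eq]
  have h' := (Equiv.prodAssoc ℕ ℕ ℕ).summable_iff.mpr h
  change Summable (fun p => auxT q x A ((Equiv.prodAssoc ℕ ℕ ℕ) p)) at h'
  rw [h'.tsum_prod]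
  apply tsum_congr
  rintro ⟨i, k⟩
  rw [← tsum_mul_left]
  apply tsum_congr
  intro j
  simp only [auxT, qTau, Equiv.prodAssoc_apply, div_eq_mul_inv, mul_inv]
  ring

lemma aux_large {q x : ℂ} (hq1 : ‖q‖ < 1) (hx : 1 ≤ ‖x‖) (A : ℤ → ℂ)
    (h : Summable (auxT q x A)) (N : ℤ) : A N = 0 := by
  obtain ⟨D, hD, hb⟩ := aux_bdd' hq1
  have inj : Function.Injective (fun n : ℕ => ((N + ((n + N.natAbs : ℕ):ℤ)).toNat, 0, n + N.natAbs)) := by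
    intro a b hab
    simp only [Prod.mk.injEq] at hab
    omega
  have h1 := (h.comp_injective inj).tendsto_atTop_zero.norm
  have h2 := h1.const_mul (D * D)
  rw [norm_zero, mul_zero] at h2
  have h3 : ‖A N‖ ≤ 0 := by
    refine ge_of_tendsto' h2 fun n => ?_
    have hi : ((N + ((n + N.natAbs : ℕ):ℤ)).toNat : ℤ) - ((0:ℕ):ℤ) - ((n + N.natAbs : ℕ):ℤ) = N := by omega
    simp only [Function.comp, auxT]
    rw [hi]
    generalize (N + ((n + N.natAbs : ℕ):ℤ)).toNat = i
    generalize n + N.natAbs = j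
    have p1 := norm_pos_iff.mpr (aux_qq_ne hq1 i)
    have p2 := norm_pos_iff.mpr (aux_qq_ne hq1 j)
    simp only [norm_div, norm_mul, norm_pow, qPoch, pow_zero, mul_zero, Finset.range_zero, Finset.prod_empty, one_mul, mul_one, norm_one, zero_mul, Nat.zero_div]
    change _ ≤ D * D * (‖A N‖ * ‖x‖^j / (‖qPoch q q i‖ * ‖qPoch q q j‖))
    rw [← mul_div_assoc, le_div_iff₀ (by positivity)]
    have e1 : 1 ≤ ‖x‖^j := one_le_pow₀ hx
    have e2 := hb i
    have e3 := hb j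
    calc ‖A N‖ * (‖qPoch q q i‖ * ‖qPoch q q j‖) ≤ ‖A N‖ * (D * D) := by gcongr
      _ ≤ ‖A N‖ * (D * D) * ‖x‖^j := le_mul_of_one_le_right (by positivity) e1
      _ = _ := by ring
  exact norm_le_zero_iff.mp h3

lemma aux_small {q x : ℂ} (hq0 : q ≠ 0) (hq1 : ‖q‖ < 1) (hx : ‖x‖ < 1) (A : ℤ → ℂ)
    (h : Summable (auxT q x A)) :
    ∑' n : ℕ, A (n : ℤ) / qPoch q q n = qPochInf x q * ∑' p, auxT q x A p := by
  set F : ℤ × (ℕ × ℕ) → ℂ := fun p => A p.1 * auxW q x p.1 p.2 with hF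
  set φ : ℕ × ℕ × ℕ → ℤ × (ℕ × ℕ) := fun p => ((p.1:ℤ) - (p.2.1:ℤ) - (p.2.2:ℤ), p.2) with hφ
  have inj : Function.Injective φ := by
    rintro ⟨i, k, j⟩ ⟨i', k', j'⟩ hh
    simp only [hφ, Prod.mk.injEq] at hh ⊢
    omega
  have hr : ∀ p, p ∉ Set.range φ → F p = 0 := by
    rintro ⟨N, k, j⟩ hp
    have : N + ((k+j:ℕ):ℤ) < 0 := by
      by_contra hc
      apply hp
      refine ⟨((N + ((k+j:ℕ):ℤ)).toNat, k, j), ?_⟩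
      simp only [hφ, Prod.mk.injEq, and_true]
      omega
    simp only [hF, auxW]
    rw [aux_bZ_neg q this]; simp
  have hFT : F ∘ φ = fun p => qPochInf x q * auxT q x A p := by
    funext ⟨i, k, j⟩
    have hi : (i:ℤ) - (k:ℤ) - (j:ℤ) + ((k+j:ℕ):ℤ) = (i:ℤ) := by push_cast; ring
    simp only [Function.comp, hF, hφ, auxW, auxT]
    rw [hi, aux_shift hq1 hx k, aux_bZ_nat, zpow_natCast, ← pow_mul]
    have := aux_x_ne hq1 hx k
    simp only [bN, qTau, div_eq_mul_inv, mul_inv, pow_add]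
    field_simp
  have hs : HasSum F (qPochInf x q * ∑' p, auxT q x A p) := by
    rw [← inj.hasSum_iff hr, hFT]
    exact h.hasSum.mul_left _
  have hs2 : HasSum (fun N : ℤ => A N * bZ q N) (qPochInf x q * ∑' p, auxT q x A p) :=
    hs.prod_fiberwise fun N => (auxW_hasSum hq0 hq1 hx N).mul_left _
  have hs3 := (Nat.cast_injective (R := ℤ)).hasSum_iff (f := fun N : ℤ => A N * bZ q N) (a := qPochInf x q * ∑' p, auxT q x A p) (by
    intro N hN
    have : N < 0 := by
      by_contra hc
      exact hN ⟨N.toNat, by simp; omega⟩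
    simp [aux_bZ_neg q this])
  rw [← (hs3.mpr hs2).tsum_eq]
  apply tsum_congr
  intro n
  simp only [Function.comp]
  rw [aux_bZ_nat, bN, div_eq_mul_inv]

theorem stmt6 (q : ℂ) (hq0 : 0 < ‖q‖) (hq1 : ‖q‖ < 1)
    (A : ℤ → ℂ) (x : ℂ)
    (hx : ∀ m : ℕ, x ≠ q ^ (-(m : ℤ)))
    (h1 : Summable (fun n : ℕ => ‖A (n : ℤ) / qPoch q q n‖))
    (h2 : Summable (fun p : ℕ × ℕ × ℕ => ‖x ^ p.2.1 * q ^ (p.1 * p.2.1) *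
      (-1 : ℂ) ^ p.2.1 * q ^ (p.2.1 * (p.2.1 - 1) / 2) *
      A ((p.1 : ℤ) - (p.2.1 : ℤ) - (p.2.2 : ℤ)) * x ^ p.2.2 /
      (qPoch q q p.1 * qPoch q q p.2.1 * qPoch x q p.2.1 * qPoch q q p.2.2)‖)) :
    ∑' n : ℕ, A (n : ℤ) / qPoch q q n
    = qPochInf x q * ∑' p : ℕ × ℕ,
        (x ^ p.2 * q ^ (p.1 * p.2) * qTau q p.2 /
          (qPoch q q p.1 * qPoch q q p.2 * qPoch x q p.2)) *
        ∑' j : ℕ, A ((p.1 : ℤ) - (p.2 : ℤ) - (j : ℤ)) * x ^ j / qPoch q q j := by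
  have h : Summable (auxT q x A) := Summable.of_norm h2
  rw [aux_rhs q x A h]
  rcases lt_or_ge ‖x‖ 1 with hx1 | hx1
  · exact aux_small (norm_pos_iff.mp hq0) hq1 hx1 A h
  · have hA := aux_large hq1 hx1 A h
    simp [hA, auxT]
end

section
/- Let q ∈ ℂ with 0 < |q| < 1, let A : ℤ → ℂ be any sequence, and let x ∈ ℂ. Assume the families (i,j) ↦ A_{i-j} q^{ij} x^j / ((q;q)_i (q;q)_j) and (i,j) ↦ A_{i-j} x^j / ((q;q)_i (q;q)_j), both indexed by ℕ×ℕ, are absolutely summable. Then ∑_{i,j≥0} A_{i-j} q^{ij} x^j / ((q;q)_i (q;q)_j) = (x;q)_∞ · ∑_{i,j≥0} A_{i-j} x^j / ((q;q)_i (q;q)_j). -/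
open Filter Topology

namespace Stmt7Aux

lemma P_succ (q : ℂ) (n : ℕ) : qPoch q q (n+1) = qPoch q q n * (1 - q^(n+1)) := by
  unfold qPoch
  rw [Finset.prod_range_succ, pow_succ']

lemma one_sub_ne {q : ℂ} (hq1 : ‖q‖ < 1) (n : ℕ) : 1 - q^(n+1) ≠ 0 := by
  intro h
  have h' : q^(n+1) = 1 := (sub_eq_zero.mp h).symm
  have : ‖q‖^(n+1) = 1 := by rw [← norm_pow, h', norm_one]
  have h2 := pow_lt_one₀ (norm_nonneg q) hq1 (Nat.succ_ne_zero n)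
  exact absurd this h2.ne

lemma P_ne {q : ℂ} (hq1 : ‖q‖ < 1) (n : ℕ) : qPoch q q n ≠ 0 := by
  induction n with
  | zero => simp [qPoch]
  | succ k ih => rw [P_succ]; exact mul_ne_zero ih (one_sub_ne hq1 k)

lemma summ {q : ℂ} (hq1 : ‖q‖ < 1) (x : ℂ) : Summable (fun k : ℕ => ‖-(x * q^k)‖) := by
  simp only [norm_neg, norm_mul, norm_pow]
  exact (summable_geometric_of_lt_one (norm_nonneg _) hq1).mul_left _

lemma multip {q : ℂ} (hq1 : ‖q‖ < 1) (x : ℂ) : Multipliable (fun k : ℕ => (1 - x * q^k)) := by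
  simpa [sub_eq_add_neg] using multipliable_one_add_of_summable (summ hq1 x)

lemma tendsto_P {q : ℂ} (hq1 : ‖q‖ < 1) (x : ℂ) :
    Tendsto (fun n => qPoch x q n) atTop (𝓝 (qPochInf x q)) :=
  (multip hq1 x).hasProd.tendsto_prod_nat

lemma inf_ne {q : ℂ} (hq1 : ‖q‖ < 1) : qPochInf q q ≠ 0 := by
  have := tprod_one_add_ne_zero_of_summable (f := fun k : ℕ => -(q * q^k)) (fun i => by
    have := one_sub_ne hq1 i
    rwa [pow_succ', sub_eq_add_neg] at this) (summ hq1 q)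
  simpa [qPochInf, sub_eq_add_neg] using this

lemma inf_succ {q : ℂ} (hq1 : ‖q‖ < 1) (x : ℂ) :
    qPochInf x q = (1 - x) * qPochInf (q * x) q := by
  have h1 := (tendsto_P hq1 x).comp (tendsto_add_atTop_nat 1)
  have h2 := (tendsto_P hq1 (q * x)).const_mul (1 - x)
  refine tendsto_nhds_unique h1 (h2.congr fun n => ?_)
  simp only [Function.comp, qPoch, Finset.prod_range_succ']
  rw [mul_comm]
  simp only [pow_zero, mul_one]
  congr 1
  refine Finset.prod_congr rfl fun k _ => ?_
  ring

lemma inf_sub_one {q : ℂ} (hq1 : ‖q‖ < 1) (x : ℂ) :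
    ‖qPochInf x q - 1‖ ≤ Real.exp (‖x‖ / (1 - ‖q‖)) - 1 := by
  refine le_of_tendsto ((tendsto_P hq1 x).sub_const 1).norm (Eventually.of_forall fun n => ?_)
  have h := (Finset.range n).norm_prod_one_add_sub_one_le (fun k => -(x * q^k))
  simp only [← sub_eq_add_neg] at h
  refine h.trans ?_
  gcongr
  refine ((summ hq1 x).sum_le_tsum _ (fun _ _ => norm_nonneg _)).trans ?_
  simp only [norm_neg, norm_mul, norm_pow]
  rw [tsum_mul_left, tsum_geometric_of_lt_one (norm_nonneg _) hq1, div_eq_mul_inv]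

lemma upper {q : ℂ} (hq1 : ‖q‖ < 1) : ∃ U : ℝ, ∀ n, ‖qPoch q q n‖ ≤ U := by
  obtain ⟨U, hU⟩ := (Metric.isBounded_range_of_tendsto _ (tendsto_P hq1 q)).exists_norm_le
  exact ⟨U, fun n => hU _ ⟨n, rfl⟩⟩

lemma lower {q : ℂ} (hq1 : ‖q‖ < 1) : ∃ U : ℝ, ∀ n, ‖(qPoch q q n)⁻¹‖ ≤ U := by
  obtain ⟨U, hU⟩ := (Metric.isBounded_range_of_tendsto _
    ((tendsto_P hq1 q).inv₀ (inf_ne hq1))).exists_norm_le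
  exact ⟨U, fun n => hU _ ⟨n, rfl⟩⟩

noncomputable def c (q : ℂ) (n j : ℕ) : ℂ := (qPoch q q j * qPoch q q (j+n))⁻¹
noncomputable def d (q : ℂ) (n j : ℕ) : ℂ := q^(j*(j+n)) * (qPoch q q j * qPoch q q (j+n))⁻¹
noncomputable def T (q : ℂ) (n : ℕ) (x : ℂ) : ℂ := ∑' j, c q n j * x^j
noncomputable def S (q : ℂ) (n : ℕ) (x : ℂ) : ℂ := ∑' j, d q n j * x^j

lemma bounds {q : ℂ} (hq1 : ‖q‖ < 1) : ∃ B : ℝ, (∀ n j, ‖c q n j‖ ≤ B) ∧ ∀ n j, ‖d q n j‖ ≤ B := by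
  obtain ⟨U, hU⟩ := lower hq1
  have h0 : 0 ≤ U := (norm_nonneg _).trans (hU 0)
  have hc : ∀ n j, ‖c q n j‖ ≤ U * U := fun n j => by
    unfold c
    rw [mul_inv, norm_mul]
    exact mul_le_mul (hU _) (hU _) (norm_nonneg _) h0
  refine ⟨U * U, hc, fun n j => ?_⟩
  have : d q n j = q^(j*(j+n)) * c q n j := rfl
  rw [this, norm_mul, norm_pow]
  exact (mul_le_of_le_one_left (norm_nonneg _) (pow_le_one₀ (norm_nonneg _) hq1.le)).trans (hc n j)

lemma ser_summ {a : ℕ → ℂ} {B : ℝ} (ha : ∀ j, ‖a j‖ ≤ B) {x : ℂ} (hx : ‖x‖ < 1) :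
    Summable (fun j => a j * x^j) := by
  refine Summable.of_norm_bounded
    ((summable_geometric_of_lt_one (norm_nonneg x) hx).mul_left B) fun j => ?_
  rw [norm_mul, norm_pow]
  gcongr
  exact ha j

lemma ser_bound {a : ℕ → ℂ} {B : ℝ} (ha : ∀ j, ‖a j‖ ≤ B) {x : ℂ} (hx : ‖x‖ < 1) :
    ‖∑' j, a j * x^j‖ ≤ B * (1 - ‖x‖)⁻¹ := by
  refine tsum_of_norm_bounded ((hasSum_geometric_of_lt_one (norm_nonneg x) hx).mul_left B)
    fun j => ?_
  rw [norm_mul, norm_pow]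
  gcongr
  exact ha j

lemma ser_sub {a : ℕ → ℂ} {B : ℝ} (ha : ∀ j, ‖a j‖ ≤ B) {x : ℂ} (hx : ‖x‖ < 1) :
    ‖∑' j, a j * x^j - a 0‖ ≤ ‖x‖ * (B * (1 - ‖x‖)⁻¹) := by
  rw [(ser_summ ha hx).tsum_eq_zero_add]
  have : ∑' j, a (j+1) * x^(j+1) = x * ∑' j, a (j+1) * x^j := by
    rw [← tsum_mul_left]; congr 1; ext j; ring
  rw [this]
  simp only [pow_zero, mul_one, add_sub_cancel_left, norm_mul]
  gcongr
  exact ser_bound (fun j => ha (j+1)) hx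

lemma qx_lt {q x : ℂ} (hq1 : ‖q‖ < 1) (hx : ‖x‖ < 1) : ‖q * x‖ < 1 := by
  rw [norm_mul]
  exact (mul_le_of_le_one_left (norm_nonneg _) hq1.le).trans_lt hx

lemma T1 {q x : ℂ} (hq1 : ‖q‖ < 1) (hx : ‖x‖ < 1) (n : ℕ) :
    T q n x = T q n (q*x) + x * T q (n+1) x := by
  obtain ⟨B, hc, hd⟩ := bounds hq1
  unfold T
  rw [(ser_summ (hc n) hx).tsum_eq_zero_add, (ser_summ (hc n) (qx_lt hq1 hx)).tsum_eq_zero_add,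
    ← tsum_mul_left, add_assoc, ← Summable.tsum_add
      ((summable_nat_add_iff 1).2 (ser_summ (hc n) (qx_lt hq1 hx)))
      ((ser_summ (hc (n+1)) hx).mul_left x)]
  simp only [pow_zero]
  congr 2
  ext j
  have e : j + (n+1) = j + 1 + n := by ring
  unfold c
  rw [P_succ q j, e]
  have := P_ne hq1 j
  have := P_ne hq1 (j+1+n)
  have := one_sub_ne hq1 j
  field_simp
  ring

lemma T2 {q x : ℂ} (hq1 : ‖q‖ < 1) (hx : ‖x‖ < 1) (n : ℕ) :
    T q (n+1) x = q^(n+1) * T q (n+1) (q*x) + T q n x := by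
  obtain ⟨B, hc, hd⟩ := bounds hq1
  unfold T
  rw [← tsum_mul_left, ← Summable.tsum_add
      ((ser_summ (hc (n+1)) (qx_lt hq1 hx)).mul_left _) (ser_summ (hc n) hx)]
  congr 1
  ext j
  have e : j + (n+1) = j + n + 1 := by ring
  unfold c
  rw [e, P_succ q (j+n)]
  have := P_ne hq1 j
  have := P_ne hq1 (j+n)
  have := one_sub_ne hq1 (j+n)
  field_simp
  ring

lemma S1 {q x : ℂ} (hq1 : ‖q‖ < 1) (hx : ‖x‖ < 1) (n : ℕ) :
    S q n x = S q n (q*x) + x * q^(n+1) * S q (n+1) (q*x) := by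
  obtain ⟨B, hc, hd⟩ := bounds hq1
  unfold S
  rw [(ser_summ (hd n) hx).tsum_eq_zero_add, (ser_summ (hd n) (qx_lt hq1 hx)).tsum_eq_zero_add,
    ← tsum_mul_left, add_assoc, ← Summable.tsum_add
      ((summable_nat_add_iff 1).2 (ser_summ (hd n) (qx_lt hq1 hx)))
      ((ser_summ (hd (n+1)) (qx_lt hq1 hx)).mul_left _)]
  simp only [pow_zero]
  congr 2
  ext j
  have e : j + (n+1) = j + 1 + n := by ring
  unfold d
  rw [P_succ q j, e]
  have := P_ne hq1 j
  have := P_ne hq1 (j+1+n)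
  have := one_sub_ne hq1 j
  field_simp
  ring

noncomputable def D (q : ℂ) (n : ℕ) (x : ℂ) : ℂ := S q n x - qPochInf x q * T q n x

lemma D1 {q x : ℂ} (hq1 : ‖q‖ < 1) (hx : ‖x‖ < 1) (n : ℕ) :
    D q n x = D q n (q*x) + x * q^(n+1) * D q (n+1) (q*x) := by
  unfold D
  rw [inf_succ hq1 x, S1 hq1 hx n]
  have h1 := T1 hq1 hx n
  have h2 := T2 hq1 hx n
  linear_combination (-qPochInf (q*x) q) * h1 + (-qPochInf (q*x) q * x) * h2

lemma D_small {q : ℂ} (hq1 : ‖q‖ < 1) : ∃ B : ℝ, ∀ n x, ‖x‖ < 1 →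
    ‖D q n x‖ ≤ (2 * ‖x‖ + (Real.exp (‖x‖ / (1 - ‖q‖)) - 1)) * (B * (1 - ‖x‖)⁻¹) := by
  obtain ⟨B, hc, hd⟩ := bounds hq1
  refine ⟨B, fun n x hx => ?_⟩
  have e : D q n x = (S q n x - d q n 0) - (T q n x - c q n 0) - (qPochInf x q - 1) * T q n x := by
    unfold D
    have : d q n 0 = c q n 0 := by simp [d, c]
    rw [this]; ring
  rw [e]
  have hs := ser_sub (hd n) hx
  have ht := ser_sub (hc n) hx
  have hb := ser_bound (hc n) hx
  have hi := inf_sub_one hq1 x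
  have hm : ‖(qPochInf x q - 1) * T q n x‖ ≤
      (Real.exp (‖x‖ / (1 - ‖q‖)) - 1) * (B * (1 - ‖x‖)⁻¹) := by
    rw [norm_mul]
    exact mul_le_mul hi hb (norm_nonneg _) ((norm_nonneg _).trans hi)
  have h1 := norm_sub_le (S q n x - d q n 0 - (T q n x - c q n 0)) ((qPochInf x q - 1) * T q n x)
  have h2 := norm_sub_le (S q n x - d q n 0) (T q n x - c q n 0)
  unfold S T at *
  linarith

lemma D_iter {q : ℂ} (hq1 : ‖q‖ < 1) (ε : ℂ → ℝ) (hε : ∀ n x, ‖x‖ < 1 → ‖D q n x‖ ≤ ε x) (N : ℕ) :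
    ∀ n x, ‖x‖ < 1 → ‖D q n x‖ ≤ Real.exp (‖x‖ / (1 - ‖q‖)) * ε (q^N * x) := by
  have hp : 0 < 1 - ‖q‖ := by linarith
  induction N with
  | zero =>
    intro n x hx
    have h := hε n x hx
    simp only [pow_zero, one_mul]
    refine h.trans (le_mul_of_one_le_left ((norm_nonneg _).trans h) ?_)
    exact Real.one_le_exp (by positivity)
  | succ N ih =>
    intro n x hx
    have e : q^(N+1) * x = q^N * (q * x) := by ring
    rw [D1 hq1 hx n, e]
    have a := ih n (q*x) (qx_lt hq1 hx)
    have b := ih (n+1) (q*x) (qx_lt hq1 hx)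
    set M := Real.exp (‖q*x‖ / (1 - ‖q‖)) * ε (q^N * (q*x)) with hM
    have hM0 : 0 ≤ M := (norm_nonneg _).trans a
    have hε0 : 0 ≤ ε (q^N * (q*x)) := by
      rw [hM] at hM0
      exact nonneg_of_mul_nonneg_right hM0 (Real.exp_pos _)
    have h3 : ‖x * q^(n+1) * D q (n+1) (q*x)‖ ≤ ‖x‖ * M := by
      rw [norm_mul, norm_mul, norm_pow]
      refine mul_le_mul (mul_le_of_le_one_right (norm_nonneg _)
        (pow_le_one₀ (norm_nonneg _) hq1.le)) b (norm_nonneg _) (norm_nonneg _)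
    refine (norm_add_le _ _).trans ((add_le_add a h3).trans ?_)
    have h4 : M + ‖x‖ * M = (‖x‖ + 1) * Real.exp (‖q*x‖ / (1 - ‖q‖)) * ε (q^N * (q*x)) := by
      rw [hM]; ring
    rw [h4]
    refine mul_le_mul_of_nonneg_right ?_ hε0
    have h5 : ‖x‖ / (1 - ‖q‖) = ‖x‖ + ‖q*x‖ / (1 - ‖q‖) := by
      rw [norm_mul]; field_simp; ring
    rw [h5, Real.exp_add]
    exact mul_le_mul_of_nonneg_right (Real.add_one_le_exp _) (Real.exp_pos _).le

lemma D_zero {q x : ℂ} (hq1 : ‖q‖ < 1) (hx : ‖x‖ < 1) (n : ℕ) : D q n x = 0 := by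
  obtain ⟨B, hB⟩ := D_small hq1
  have h := fun N => D_iter hq1 _ hB N n x hx
  have ht : Tendsto (fun N : ℕ => ‖q^N * x‖) atTop (𝓝 0) := by
    have := ((tendsto_pow_atTop_nhds_zero_of_norm_lt_one hq1).mul_const x).norm
    simpa using this
  have hcont : ContinuousAt (fun t : ℝ => Real.exp (‖x‖ / (1 - ‖q‖)) *
      ((2 * t + (Real.exp (t / (1 - ‖q‖)) - 1)) * (B * (1 - t)⁻¹))) 0 := by
    have : (1 - (0:ℝ)) ≠ 0 := by norm_num
    fun_prop (disch := assumption)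
  have hl := hcont.tendsto.comp ht
  have := ge_of_tendsto hl (Eventually.of_forall h)
  simpa using this

def eqv : ℤ × ℕ ≃ ℕ × ℕ where
  toFun p := (p.2 + p.1.toNat, p.2 + (-p.1).toNat)
  invFun p := ((p.1 : ℤ) - p.2, min p.1 p.2)
  left_inv p := by
    rcases p with ⟨n, m⟩
    ext <;> simp <;> omega
  right_inv p := by
    rcases p with ⟨n, m⟩
    ext <;> simp <;> omega

lemma fiber {q x : ℂ} (hq1 : ‖q‖ < 1) (hx : ‖x‖ < 1) (n : ℤ) (a : ℂ) :
    ∑' m : ℕ, a * q ^ ((m + n.toNat) * (m + (-n).toNat)) * x ^ (m + (-n).toNat) /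
      (qPoch q q (m + n.toNat) * qPoch q q (m + (-n).toNat)) =
    qPochInf x q * ∑' m : ℕ, a * x ^ (m + (-n).toNat) /
      (qPoch q q (m + n.toNat) * qPoch q q (m + (-n).toNat)) := by
  have key : ∀ k, S q k x = qPochInf x q * T q k x := fun k => sub_eq_zero.mp (D_zero hq1 hx k)
  obtain ⟨k, rfl | rfl⟩ := n.eq_nat_or_neg
  · have h1 : ((k:ℤ)).toNat = k := by omega
    have h2 : (-(k:ℤ)).toNat = 0 := by omega
    have k1 := congrArg (fun z => a * z) (key k)
    simp only [S, T] at k1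
    rw [mul_left_comm, ← tsum_mul_left, ← tsum_mul_left] at k1
    simp only [h1, h2, add_zero]
    refine (tsum_congr fun m => ?_).trans (k1.trans (congrArg (fun z => qPochInf x q * z) (tsum_congr fun m => ?_)))
    · unfold d; ring
    · unfold c; ring
  · have h1 : (-(k:ℤ)).toNat = 0 := by omega
    have h2 : (-(-(k:ℤ))).toNat = k := by omega
    have k1 := congrArg (fun z => a * x^k * z) (key k)
    simp only [S, T] at k1
    rw [mul_left_comm, ← tsum_mul_left, ← tsum_mul_left] at k1
    simp only [h1, h2, add_zero]
    refine (tsum_congr fun m => ?_).trans (k1.trans (congrArg (fun z => qPochInf x q * z) (tsum_congr fun m => ?_)))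
    · unfold d; ring
    · unfold c; ring

lemma A_zero {q x a : ℂ} (hq1 : ‖q‖ < 1) (hx : 1 ≤ ‖x‖) (r s : ℕ)
    (h : Summable (fun m : ℕ => a * x ^ (m + r) / (qPoch q q (m + s) * qPoch q q (m + r)))) :
    a = 0 := by
  obtain ⟨U, hU⟩ := upper hq1
  have ht := (h.tendsto_atTop_zero.norm).mul_const (U * U)
  rw [norm_zero, zero_mul] at ht
  have : ‖a‖ ≤ 0 := by
    refine ge_of_tendsto ht (Eventually.of_forall fun m => ?_)
    have h1 := norm_pos_iff.mpr (P_ne hq1 (m+s))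
    have h2 := norm_pos_iff.mpr (P_ne hq1 (m+r))
    rw [norm_div, norm_mul, norm_mul, norm_pow, div_mul_eq_mul_div, le_div_iff₀ (by positivity)]
    refine mul_le_mul (le_mul_of_one_le_right (norm_nonneg _) (one_le_pow₀ hx))
      (mul_le_mul (hU _) (hU _) h2.le (h1.le.trans (hU _))) (by positivity) (by positivity)
  simpa using this

end Stmt7Aux

theorem stmt7 (q : ℂ) (hq0 : 0 < ‖q‖) (hq1 : ‖q‖ < 1)
    (A : ℤ → ℂ) (x : ℂ)
    (h1 : Summable (fun p : ℕ × ℕ => ‖A ((p.1 : ℤ) - (p.2 : ℤ)) * q ^ (p.1 * p.2) *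
      x ^ p.2 / (qPoch q q p.1 * qPoch q q p.2)‖))
    (h2 : Summable (fun p : ℕ × ℕ => ‖A ((p.1 : ℤ) - (p.2 : ℤ)) *
      x ^ p.2 / (qPoch q q p.1 * qPoch q q p.2)‖)) :
    ∑' p : ℕ × ℕ, A ((p.1 : ℤ) - (p.2 : ℤ)) * q ^ (p.1 * p.2) *
      x ^ p.2 / (qPoch q q p.1 * qPoch q q p.2)
    = qPochInf x q * ∑' p : ℕ × ℕ, A ((p.1 : ℤ) - (p.2 : ℤ)) *
      x ^ p.2 / (qPoch q q p.1 * qPoch q q p.2) := by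
  have e : ∀ p : ℤ × ℕ, (((Stmt7Aux.eqv p).1 : ℕ) : ℤ) - (((Stmt7Aux.eqv p).2 : ℕ) : ℤ) = p.1 := by
    rintro ⟨n, m⟩
    simp only [Stmt7Aux.eqv, Equiv.coe_fn_mk]
    omega
  have s1 := (Equiv.summable_iff Stmt7Aux.eqv).2 h1.of_norm
  have s2 := (Equiv.summable_iff Stmt7Aux.eqv).2 h2.of_norm
  rw [← Equiv.tsum_eq Stmt7Aux.eqv, ← Equiv.tsum_eq Stmt7Aux.eqv (fun p : ℕ × ℕ =>
    A ((p.1 : ℤ) - (p.2 : ℤ)) * x ^ p.2 / (qPoch q q p.1 * qPoch q q p.2))]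
  simp only [Function.comp_def, e] at s1 s2 ⊢
  rw [s1.tsum_prod, s2.tsum_prod, ← tsum_mul_left]
  congr 1
  ext n
  rcases lt_or_ge ‖x‖ 1 with hx | hx
  · exact Stmt7Aux.fiber hq1 hx n (A n)
  · have hA : A n = 0 := by
      have s3 := s2.prod_factor n
      simp only [Stmt7Aux.eqv, Equiv.coe_fn_mk] at s3
      exact Stmt7Aux.A_zero hq1 hx (-n).toNat n.toNat s3
    simp [hA]
end

section
/- Let q ∈ ℂ with 0 < |q| < 1 and let x ∈ ℂ with |x| < 1. Assume the family (i,j) ↦ (-1)^{i-j} q^{(i-j)^2} x^j / ((q^2;q^2)_i (q^2;q^2)_j) indexed by ℕ×ℕ is absolutely summable. Then ∑_{i,j≥0} (-1)^{i-j} q^{(i-j)^2} x^j / ((q^2;q^2)_i (q^2;q^2)_j) = (q;q^2)_∞ · (xq;q^2)_∞ / (x;q^2)_∞. -/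
noncomputable def cf (b a Q : ℂ) (n : ℕ) : ℂ :=
  ∏ k ∈ Finset.range n, ((b - a * Q ^ k) / (1 - Q ^ (k + 1)))

lemma one_sub_ne_s9 {Q : ℂ} (hQ : ‖Q‖ < 1) (k : ℕ) : 1 - Q ^ (k + 1) ≠ 0 := by
  intro h
  have h2 : Q ^ (k + 1) = 1 := (sub_eq_zero.mp h).symm
  have h3 : ‖Q‖ ^ (k + 1) = 1 := by rw [← norm_pow, h2, norm_one]
  have h4 := pow_lt_one₀ (norm_nonneg Q) hQ (Nat.succ_ne_zero k)
  exact absurd h3 h4.ne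

lemma cf_succ {b a Q : ℂ} (hQ : ‖Q‖ < 1) (n : ℕ) :
    cf b a Q (n + 1) * (1 - Q ^ (n + 1)) = cf b a Q n * (b - a * Q ^ n) := by
  have := one_sub_ne_s9 hQ n
  unfold cf
  rw [Finset.prod_range_succ]
  field_simp

lemma cf_summable {b a Q z : ℂ} (hQ : ‖Q‖ < 1) (hz : ‖b * z‖ < 1) :
    Summable (fun i => ‖cf b a Q i * z ^ i‖) := by
  have ht : Filter.Tendsto (fun n : ℕ => ‖(b - a * Q ^ n) / (1 - Q ^ (n + 1)) * z‖) Filter.atTop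
      (nhds ‖(b - a * 0) / (1 - 0) * z‖) := by
    have h0 := tendsto_pow_atTop_nhds_zero_of_norm_lt_one hQ
    have h1 := h0.comp (Filter.tendsto_add_atTop_nat 1)
    refine Filter.Tendsto.norm (Filter.Tendsto.mul_const _ (Filter.Tendsto.div ?_ ?_ (by simp)))
    · exact tendsto_const_nhds.sub (h0.const_mul a)
    · exact tendsto_const_nhds.sub h1
  simp only [mul_zero, sub_zero, div_one] at ht
  obtain ⟨r, hr1, hr2⟩ := exists_between hz
  refine summable_of_ratio_norm_eventually_le (r := r) hr2 ?_
  filter_upwards [ht.eventually (gt_mem_nhds hr1)] with n hn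
  rw [norm_norm, norm_norm]
  have : cf b a Q (n + 1) * z ^ (n + 1) =
      ((b - a * Q ^ n) / (1 - Q ^ (n + 1)) * z) * (cf b a Q n * z ^ n) := by
    unfold cf
    rw [Finset.prod_range_succ]
    ring
  rw [this, norm_mul]
  gcongr

lemma cf_fun {b a Q z : ℂ} (hQ : ‖Q‖ < 1) (hz : ‖b * z‖ < 1) (hz' : ‖b * (Q * z)‖ < 1) :
    (∑' i, cf b a Q i * z ^ i) * (1 - b * z) = (1 - a * z) * ∑' i, cf b a Q i * (Q * z) ^ i := by
  have s1 : Summable (fun i => cf b a Q i * z ^ i) := (cf_summable hQ hz).of_norm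
  have s2 : Summable (fun i => cf b a Q i * (Q * z) ^ i) := (cf_summable hQ hz').of_norm
  have e : (∑' i, cf b a Q i * z ^ i) - (∑' i, cf b a Q i * (Q * z) ^ i) =
      z * (b * (∑' i, cf b a Q i * z ^ i) - a * (∑' i, cf b a Q i * (Q * z) ^ i)) := by
    rw [← s1.tsum_sub s2, (s1.sub s2).tsum_eq_zero_add, ← tsum_mul_left, ← tsum_mul_left,
      ← (s1.mul_left b).tsum_sub (s2.mul_left a), ← tsum_mul_left]
    simp only [pow_zero, sub_self, zero_add]
    refine tsum_congr fun i => ?_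
    have := cf_succ (b := b) (a := a) hQ i
    linear_combination z ^ (i + 1) * this
  linear_combination e

lemma norm_aux {b Q z : ℂ} (hQ : ‖Q‖ < 1) (hz : ‖b * z‖ < 1) (n : ℕ) :
    ‖b * (Q ^ n * z)‖ < 1 := by
  have : b * (Q ^ n * z) = Q ^ n * (b * z) := by ring
  rw [this, norm_mul, norm_pow]
  have h := pow_le_one₀ (n := n) (norm_nonneg Q) hQ.le
  nlinarith [norm_nonneg (b * z), pow_nonneg (norm_nonneg Q) n]

lemma cf_iter {b a Q z : ℂ} (hQ : ‖Q‖ < 1) (hz : ‖b * z‖ < 1) (n : ℕ) :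
    (∑' i, cf b a Q i * z ^ i) * qPoch (b * z) Q n =
      qPoch (a * z) Q n * ∑' i, cf b a Q i * (Q ^ n * z) ^ i := by
  induction n with
  | zero => simp [qPoch]
  | succ n ih =>
    have h := cf_fun (a := a) hQ (norm_aux hQ hz n)
      (by have := norm_aux hQ hz (n + 1); rwa [pow_succ', mul_assoc] at this)
    rw [← mul_assoc Q, ← pow_succ'] at h
    simp only [qPoch, Finset.prod_range_succ] at ih ⊢
    linear_combination (1 - b * z * Q ^ n) * ih + (∏ x ∈ Finset.range n, (1 - a * z * Q ^ x)) * h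

lemma qPoch_tendsto {Q : ℂ} (hQ : ‖Q‖ < 1) (a : ℂ) :
    Filter.Tendsto (qPoch a Q) Filter.atTop (nhds (qPochInf a Q)) := by
  have hm : Multipliable (fun k : ℕ => 1 - a * Q ^ k) := by
    have : Summable (fun k : ℕ => ‖-(a * Q ^ k)‖) := by
      simp only [norm_neg, norm_mul, norm_pow]
      exact (summable_geometric_of_lt_one (norm_nonneg Q) hQ).mul_left _
    simpa [sub_eq_add_neg] using multipliable_one_add_of_summable this
  exact hm.hasProd.tendsto_prod_nat

lemma cf_lim {b a Q z : ℂ} (hQ : ‖Q‖ < 1) (hz : ‖b * z‖ < 1) :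
    Filter.Tendsto (fun n : ℕ => ∑' i, cf b a Q i * (Q ^ n * z) ^ i) Filter.atTop (nhds 1) := by
  have h : Filter.Tendsto (fun n : ℕ => ∑' i, cf b a Q i * (Q ^ n * z) ^ i) Filter.atTop
      (nhds (∑' i, cf b a Q i * (0 * z) ^ i)) := by
    refine tendsto_tsum_of_dominated_convergence (cf_summable (a := a) hQ hz) ?_ ?_
    · intro i
      exact (((tendsto_pow_atTop_nhds_zero_of_norm_lt_one hQ).mul_const z).pow i).const_mul _
    · refine Filter.Eventually.of_forall fun n i => ?_
      rw [norm_mul, norm_mul, norm_pow, norm_pow, norm_mul, norm_pow]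
      have h := pow_le_one₀ (n := n) (norm_nonneg Q) hQ.le
      gcongr
      exact mul_le_of_le_one_left (norm_nonneg z) h
  have e : (∑' i, cf b a Q i * (0 * z) ^ i) = 1 := by
    rw [tsum_eq_single 0]
    · simp [cf]
    · intro i hi
      simp [hi]
  rwa [e] at h

lemma cf_main {b a Q z : ℂ} (hQ : ‖Q‖ < 1) (hz : ‖b * z‖ < 1) :
    (∑' i, cf b a Q i * z ^ i) * qPochInf (b * z) Q = qPochInf (a * z) Q := by
  have h1 := (qPoch_tendsto hQ (b * z)).const_mul (∑' i, cf b a Q i * z ^ i)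
  have h2 := (qPoch_tendsto hQ (a * z)).mul (cf_lim (a := a) hQ hz)
  rw [mul_one] at h2
  refine tendsto_nhds_unique h1 (h2.congr fun n => (cf_iter hQ hz n).symm)

lemma qPochInf_zero (Q : ℂ) : qPochInf 0 Q = 1 := by simp [qPochInf]

lemma qPochInf_ne {Q x : ℂ} (hQ : ‖Q‖ < 1) (hx : ‖x‖ < 1) : qPochInf x Q ≠ 0 := by
  have h := cf_main (b := 1) (a := 0) (z := x) hQ (by simpa using hx)
  rw [zero_mul, one_mul, qPochInf_zero] at h
  exact right_ne_zero_of_mul_eq_one h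

lemma qPoch_ne {Q : ℂ} (hQ : ‖Q‖ < 1) (n : ℕ) : qPoch Q Q n ≠ 0 := by
  unfold qPoch
  refine Finset.prod_ne_zero_iff.mpr fun k _ => ?_
  have := one_sub_ne_s9 hQ k
  rwa [pow_succ'] at this

lemma cf_one (a Q : ℂ) (n : ℕ) : cf 1 a Q n = qPoch a Q n / qPoch Q Q n := by
  simp only [cf, qPoch, Finset.prod_div_distrib, pow_succ']

lemma cf_zero {q : ℂ} (hq : ‖q ^ 2‖ < 1) (hq0 : q ≠ 0) (n : ℕ) :
    cf 0 1 (q ^ 2) n = (-1) ^ n * q ^ ((n : ℤ) ^ 2 - n) / qPoch (q ^ 2) (q ^ 2) n := by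
  induction n with
  | zero => simp [cf, qPoch]
  | succ n ih =>
    have h := cf_succ (b := 0) (a := 1) hq n
    have h1 := qPoch_ne hq n
    have h2 := one_sub_ne_s9 hq n
    have h3 : qPoch (q ^ 2) (q ^ 2) (n + 1) =
        qPoch (q ^ 2) (q ^ 2) n * (1 - (q ^ 2) ^ (n + 1)) := by
      rw [qPoch, qPoch, Finset.prod_range_succ, pow_succ' _ n]
    have h4 : q ^ (((n + 1 : ℕ) : ℤ) ^ 2 - ((n + 1 : ℕ) : ℤ)) =
        q ^ ((n : ℤ) ^ 2 - n) * (q ^ 2) ^ n := by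
      rw [← pow_mul, ← zpow_natCast q (2 * n), ← zpow_add₀ hq0]
      congr 1
      push_cast
      ring
    rw [h3, h4, eq_div_iff (mul_ne_zero h1 h2)]
    rw [ih] at h
    field_simp at h
    linear_combination h

lemma inf_shift {Q : ℂ} (hQ : ‖Q‖ < 1) (a : ℂ) :
    qPochInf a Q = (1 - a) * qPochInf (a * Q) Q := by
  have h1 := (qPoch_tendsto hQ a).comp (Filter.tendsto_add_atTop_nat 1)
  have h2 := (qPoch_tendsto hQ (a * Q)).const_mul (1 - a)
  refine tendsto_nhds_unique h1 (h2.congr fun n => ?_)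
  simp only [Function.comp, qPoch, Finset.prod_range_succ']
  simp only [pow_zero, mul_one, pow_succ']
  rw [mul_comm]
  simp only [mul_assoc]

lemma inf_neg {q : ℂ} (hq : ‖q ^ 2‖ < 1) (hq0 : q ≠ 0) (j : ℕ) :
    (-1) ^ j * q ^ ((j : ℤ) ^ 2) * qPochInf (q ^ (1 - 2 * (j : ℤ))) (q ^ 2) =
      qPochInf q (q ^ 2) * qPoch q (q ^ 2) j := by
  induction j with
  | zero => simp [qPoch]
  | succ j ih =>
    have h := inf_shift hq (q ^ (1 - 2 * ((j + 1 : ℕ) : ℤ)))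
    have e1 : q ^ (1 - 2 * ((j + 1 : ℕ) : ℤ)) * q ^ 2 = q ^ (1 - 2 * (j : ℤ)) := by
      rw [← zpow_natCast q 2, ← zpow_add₀ hq0]
      congr 1
      push_cast
      ring
    have e2 : q ^ (((j + 1 : ℕ) : ℤ) ^ 2) = q ^ ((j : ℤ) ^ 2) * (q * (q ^ 2) ^ j) := by
      rw [← pow_mul, ← pow_succ', ← zpow_natCast q (2 * j + 1), ← zpow_add₀ hq0]
      congr 1
      push_cast
      ring
    have e3 : (q * (q ^ 2) ^ j) * q ^ (1 - 2 * ((j + 1 : ℕ) : ℤ)) = 1 := by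
      rw [← pow_mul, ← pow_succ', ← zpow_natCast q (2 * j + 1), ← zpow_add₀ hq0]
      convert zpow_zero q using 2
      push_cast
      ring
    rw [e1] at h
    rw [h, e2]
    have e4 : qPoch q (q ^ 2) (j + 1) = qPoch q (q ^ 2) j * (1 - q * (q ^ 2) ^ j) := by
      rw [qPoch, qPoch, Finset.prod_range_succ]
    rw [e4]
    linear_combination (1 - q * (q ^ 2) ^ j) * ih + ((-1) ^ j * q ^ ((j : ℤ) ^ 2) * qPochInf (q ^ (1 - 2 * (j : ℤ))) (q ^ 2)) * e3

theorem stmt9 (q : ℂ) (hq0 : 0 < ‖q‖) (hq1 : ‖q‖ < 1)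
    (x : ℂ) (hx : ‖x‖ < 1)
    (h1 : Summable (fun p : ℕ × ℕ => ‖(-1 : ℂ) ^ ((p.1 : ℤ) - (p.2 : ℤ)) *
      q ^ (((p.1 : ℤ) - (p.2 : ℤ)) ^ 2) * x ^ p.2 /
      (qPoch (q ^ 2) (q ^ 2) p.1 * qPoch (q ^ 2) (q ^ 2) p.2)‖)) :
    ∑' p : ℕ × ℕ, (-1 : ℂ) ^ ((p.1 : ℤ) - (p.2 : ℤ)) *
      q ^ (((p.1 : ℤ) - (p.2 : ℤ)) ^ 2) * x ^ p.2 /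
      (qPoch (q ^ 2) (q ^ 2) p.1 * qPoch (q ^ 2) (q ^ 2) p.2)
    = qPochInf q (q ^ 2) * qPochInf (x * q) (q ^ 2) / qPochInf x (q ^ 2) := by
  have hq : q ≠ 0 := norm_pos_iff.mp hq0
  have hQ : ‖q ^ 2‖ < 1 := by
    rw [norm_pow]
    exact pow_lt_one₀ (norm_nonneg q) hq1 two_ne_zero
  have hs := h1.of_norm
  rw [← (Equiv.prodComm ℕ ℕ).tsum_eq]
  refine ((Equiv.prodComm ℕ ℕ).summable_iff.mpr hs).tsum_prod.trans ?_
  have key : ∀ j : ℕ, ∑' i : ℕ, (-1 : ℂ) ^ ((i : ℤ) - (j : ℤ)) *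
      q ^ (((i : ℤ) - (j : ℤ)) ^ 2) * x ^ j /
      (qPoch (q ^ 2) (q ^ 2) i * qPoch (q ^ 2) (q ^ 2) j) =
      qPochInf q (q ^ 2) * (cf 1 q (q ^ 2) j * x ^ j) := by
    intro j
    have hE := cf_main (b := 0) (a := 1) (z := q ^ (1 - 2 * (j : ℤ))) hQ (by simp)
    rw [zero_mul, one_mul, qPochInf_zero, mul_one] at hE
    have hN := inf_neg hQ hq j
    rw [← hE] at hN
    have : qPochInf q (q ^ 2) * (cf 1 q (q ^ 2) j * x ^ j) =
        (qPochInf q (q ^ 2) * qPoch q (q ^ 2) j) * (x ^ j / qPoch (q ^ 2) (q ^ 2) j) := by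
      rw [cf_one]
      ring
    rw [this, ← hN, ← tsum_mul_left, ← tsum_mul_right]
    refine tsum_congr fun i => ?_
    rw [cf_zero hQ hq]
    have e1 : (-1 : ℂ) ^ ((i : ℤ) - (j : ℤ)) = (-1) ^ j * (-1) ^ i := by
      rw [zpow_sub₀ (by norm_num), zpow_natCast, zpow_natCast]
      rcases neg_one_pow_eq_or ℂ j with h | h <;> rw [h] <;> simp [div_neg]
    have e2 : q ^ (((i : ℤ) - (j : ℤ)) ^ 2) =
        q ^ ((j : ℤ) ^ 2) * q ^ ((i : ℤ) ^ 2 - i) * (q ^ (1 - 2 * (j : ℤ))) ^ i := by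
      rw [← zpow_natCast (q ^ (1 - 2 * (j : ℤ))) i, ← zpow_mul, ← zpow_add₀ hq, ← zpow_add₀ hq]
      congr 1
      ring
    rw [e1, e2]
    have := qPoch_ne hQ i
    have := qPoch_ne hQ j
    field_simp
  have hG := cf_main (b := 1) (a := q) (z := x) hQ (by simpa using hx)
  rw [one_mul] at hG
  rw [eq_div_iff (qPochInf_ne hQ hx), mul_comm x q, ← hG, ← mul_assoc, ← tsum_mul_left]
  congr 1
  exact tsum_congr key
end
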